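/- For every real parameter a there exists a three times continuously differentiable function H : ℝ → ℝ with H(ξ) > 0 for all ξ, satisfying (H'''(ξ) + ξ² + a)·H(ξ)³ = 1 for all ξ ∈ ℝ, and such that |ξ|^{2/3}·H(ξ) → 1 both as ξ → +∞ and as ξ → −∞. -/

import Mathlib

open Filter

/-!
Reflect: `K x = H (-x)` solves `K''' = x² + a - K⁻³`. Fix a profile `κ` which agrees with
`(1 + x²)^(-1/3)` to leading order at infinity and satisfies `κ''' < x² + a` everywhere, and put
`k = K - κ`. The energy `E = k k'' - k'² / 2` has derivative
`k k''' = (K - κ) (x² + a - κ''' - K⁻³)`, which the monotonicity of `K ↦ -K⁻³` keeps above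
`-C / (1 + x²)`. Truncate `K⁻³` near `K = 0` and solve on `[-N, N]` with `k = 0` at both ends and
`k' = 0` at the left end: then `E(-N) = 0 ≥ E(N)`, hence `|E| ≤ π C` uniformly in `N`.

Since `(k²)'' = 2 E + 3 k'² ≥ -2 π C`, a large value of `|k|` persists on one side, where `E` would
grow too much; this bounds `K` from above and gives `k = o(κ)` at infinity. As
`K''' ≤ x² + a`, the upper bound also gives a lower bound on `K'`, so a small value of `K` persists
to the left and the term `K⁻³` would make `E` grow too much. Thus `K` is locally bounded away from
`0`, and compactness yields an entire solution.
-/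

namespace ThinFilm

open Set Topology
open scoped Nat NNReal

/-! ### Jets and Taylor bounds -/

/-- `u` is an `n`-jet on `s`: the functions `u 0, …, u n` are the successive derivatives of `u 0`
at the points of `s`. Carrying the derivatives along as data avoids `deriv` on closed intervals. -/
def IsJetOn (n : ℕ) (u : ℕ → ℝ → ℝ) (s : Set ℝ) : Prop :=
  ∀ i < n, ∀ x ∈ s, HasDerivAt (u i) (u (i + 1) x) x

namespace IsJetOn

variable {m n : ℕ} {u v : ℕ → ℝ → ℝ} {s t : Set ℝ}

lemma mono (hu : IsJetOn n u t) (hmn : m ≤ n) (hst : s ⊆ t) : IsJetOn m u s :=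
  fun i hi x hx => hu i (hi.trans_le hmn) x (hst hx)

lemma shift (hu : IsJetOn (n + 1) u s) : IsJetOn n (fun i => u (i + 1)) s :=
  fun i hi x hx => hu (i + 1) (Nat.succ_lt_succ hi) x hx

lemma neg (hu : IsJetOn n u s) : IsJetOn n (fun i x => -u i x) s :=
  fun i hi x hx => (hu i hi x hx).fun_neg

lemma sub (hu : IsJetOn n u s) (hv : IsJetOn n v s) : IsJetOn n (fun i x => u i x - v i x) s :=
  fun i hi x hx => (hu i hi x hx).fun_sub (hv i hi x hx)

lemma add (hu : IsJetOn n u s) (hv : IsJetOn n v s) : IsJetOn n (fun i x => u i x + v i x) s :=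
  fun i hi x hx => (hu i hi x hx).fun_add (hv i hi x hx)

lemma const_mul (c : ℝ) (hu : IsJetOn n u s) : IsJetOn n (fun i x => c * u i x) s :=
  fun i hi x hx => (hu i hi x hx).const_mul c

lemma comp_affine (hu : IsJetOn n u s) (b c : ℝ) :
    IsJetOn n (fun i x => b ^ i * u i (b * x + c)) ((fun x => b * x + c) ⁻¹' s) := by
  intro i hi x hx
  have hinner : HasDerivAt (fun x => b * x + c) b x := by
    simpa using ((hasDerivAt_id x).const_mul b).add_const c
  refine (((hu i hi _ hx).scomp x hinner).const_mul (b ^ i)).congr_deriv ?_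
  simp only [smul_eq_mul, pow_succ, mul_assoc]

lemma reflect (hu : IsJetOn n u s) :
    IsJetOn n (fun i x => (-1) ^ i * u i (-x)) (Neg.neg ⁻¹' s) := by
  simpa [Function.comp_def] using hu.comp_affine (-1) 0

lemma continuousOn (hu : IsJetOn n u s) {i : ℕ} (hi : i < n) : ContinuousOn (u i) s :=
  fun x hx => (hu i hi x hx).continuousAt.continuousWithinAt

lemma iteratedDeriv_eq (hu : IsJetOn n u univ) {i : ℕ} (hi : i ≤ n) :
    iteratedDeriv i (u 0) = u i := by
  induction i with
  | zero => exact iteratedDeriv_zero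
  | succ i ih =>
    rw [iteratedDeriv_succ, ih (by lia)]
    exact funext fun x => (hu i hi x (mem_univ x)).deriv

lemma contDiff (hu : IsJetOn n u univ) (hc : Continuous (u n)) : ContDiff ℝ n (u 0) := by
  refine contDiff_iff_iteratedDeriv.2 ⟨fun i hi => ?_, fun i hi => ?_⟩ <;> norm_cast at hi
  · rw [hu.iteratedDeriv_eq hi]
    rcases hi.lt_or_eq with hi | rfl
    · exact continuousOn_univ.1 (hu.continuousOn hi)
    · exact hc
  · rw [hu.iteratedDeriv_eq hi.le]
    exact fun x => (hu i hi x (mem_univ x)).differentiableAt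

end IsJetOn

lemma mul_sub_le_sub_of_hasDerivAt {f f' : ℝ → ℝ} {x₀ x₁ c : ℝ} (h : x₀ ≤ x₁)
    (hf : ∀ x ∈ Icc x₀ x₁, HasDerivAt f (f' x) x) (hc : ∀ x ∈ Icc x₀ x₁, c ≤ f' x) :
    c * (x₁ - x₀) ≤ f x₁ - f x₀ := by
  refine (convex_Icc x₀ x₁).mul_sub_le_image_sub_of_le_deriv
    (fun x hx => (hf x hx).continuousAt.continuousWithinAt)
    (fun x hx => (hf x (interior_subset hx)).differentiableAt.differentiableWithinAt)
    (fun x hx => ?_) x₀ (left_mem_Icc.2 h) x₁ (right_mem_Icc.2 h) h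
  rw [(hf x (interior_subset hx)).deriv]
  exact hc x (interior_subset hx)

/-- The Taylor polynomial of degree `n - 1` at `x₀` of the jet `u`. -/
noncomputable def taylorSum (u : ℕ → ℝ → ℝ) (n : ℕ) (x₀ x : ℝ) : ℝ :=
  ∑ i ∈ Finset.range n, u i x₀ * (x - x₀) ^ i / i !

lemma hasDerivAt_sub_pow_div_factorial (n : ℕ) (c x₀ x : ℝ) :
    HasDerivAt (fun y => c * (y - x₀) ^ (n + 1) / (n + 1)!) (c * (x - x₀) ^ n / n !) x := by
  refine (((((hasDerivAt_id x).sub_const x₀).fun_pow (n + 1)).const_mul c).div_const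
    ((n + 1)! : ℝ)).congr_deriv ?_
  rw [Nat.factorial_succ]
  push_cast
  simp only [id, mul_one]
  field_simp

lemma hasDerivAt_taylorSum (u : ℕ → ℝ → ℝ) (n : ℕ) (x₀ x : ℝ) :
    HasDerivAt (taylorSum u (n + 1) x₀) (taylorSum (fun i => u (i + 1)) n x₀ x) x := by
  have hsplit : taylorSum u (n + 1) x₀ = fun y =>
      (∑ i ∈ Finset.range n, u (i + 1) x₀ * (y - x₀) ^ (i + 1) / (i + 1)!) + u 0 x₀ := by
    funext y
    simp [taylorSum, Finset.sum_range_succ']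
  rw [hsplit]
  exact (HasDerivAt.fun_sum fun i _ =>
    hasDerivAt_sub_pow_div_factorial i (u (i + 1) x₀) x₀ x).add_const _

lemma IsJetOn.taylorSum_add_le {n : ℕ} {u : ℕ → ℝ → ℝ} {x₀ x₁ c : ℝ} (h : x₀ ≤ x₁)
    (hu : IsJetOn n u (Icc x₀ x₁)) (hc : ∀ x ∈ Icc x₀ x₁, c ≤ u n x) :
    taylorSum u n x₀ x₁ + c * (x₁ - x₀) ^ n / n ! ≤ u 0 x₁ := by
  induction n generalizing u x₁ with
  | zero => simpa [taylorSum] using hc x₁ (right_mem_Icc.2 h)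
  | succ n ih =>
    have hremainder := mul_sub_le_sub_of_hasDerivAt (c := 0) h
      (fun x hx => ((hu 0 n.succ_pos x hx).fun_sub (hasDerivAt_taylorSum u n x₀ x)).fun_sub
        (hasDerivAt_sub_pow_div_factorial n c x₀ x))
      (fun x hx => by
        have hsub : Icc x₀ x ⊆ Icc x₀ x₁ := Icc_subset_Icc_right hx.2
        linarith [ih hx.1 (hu.shift.mono le_rfl hsub) fun y hy => hc y (hsub hy)])
    have hx₀ : taylorSum u (n + 1) x₀ x₀ = u 0 x₀ := by
      simp [taylorSum, Finset.sum_range_succ']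
    rw [hx₀, sub_self x₀, zero_pow (by simp), mul_zero, zero_div] at hremainder
    linarith

lemma IsJetOn.taylorSum_add_le_left {n : ℕ} {u : ℕ → ℝ → ℝ} {x₀ x₁ c : ℝ} (h : x₁ ≤ x₀)
    (hu : IsJetOn n u (Icc x₁ x₀)) (hc : ∀ x ∈ Icc x₁ x₀, c ≤ (-1) ^ n * u n x) :
    taylorSum u n x₀ x₁ + c * (x₀ - x₁) ^ n / n ! ≤ u 0 x₁ := by
  have hpre : Neg.neg ⁻¹' Icc x₁ x₀ = Icc (-x₀) (-x₁) := by simp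
  have hreflect := IsJetOn.taylorSum_add_le (neg_le_neg h)
    (hpre ▸ hu.reflect) fun x hx => hc (-x) ⟨by linarith [hx.2], by linarith [hx.1]⟩
  have hsum : taylorSum (fun i x => (-1) ^ i * u i (-x)) n (-x₀) (-x₁) = taylorSum u n x₀ x₁ := by
    refine Finset.sum_congr rfl fun i _ => ?_
    simp only [neg_neg]
    rw [show x₁ - x₀ = -1 * (-x₁ - -x₀) by ring, mul_pow]
    ring
  simpa [hsum, neg_add_eq_sub] using hreflect

namespace IsJetOn

variable {u : ℕ → ℝ → ℝ}

lemma tangent_add_le {x y c : ℝ} (hu : IsJetOn 2 u (uIcc x y)) (hc : ∀ z ∈ uIcc x y, c ≤ u 2 z) :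
    u 0 x + u 1 x * (y - x) + c * (y - x) ^ 2 / 2 ≤ u 0 y := by
  rcases le_total x y with h | h
  · rw [uIcc_of_le h] at hu hc
    simpa [taylorSum, Finset.sum_range_succ] using hu.taylorSum_add_le h hc
  · rw [uIcc_of_ge h] at hu hc
    rw [← neg_sub x y, neg_sq]
    simpa [taylorSum, Finset.sum_range_succ] using
      hu.taylorSum_add_le_left h fun z hz => by simpa using hc z hz

lemma abs_sub_tangent_le {x y B : ℝ} (hu : IsJetOn 2 u (uIcc x y))
    (hB : ∀ z ∈ uIcc x y, |u 2 z| ≤ B) :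
    |u 0 y - (u 0 x + u 1 x * (y - x))| ≤ B * (y - x) ^ 2 / 2 := by
  have hlower := hu.tangent_add_le fun z hz => (abs_le.1 (hB z hz)).1
  have hupper := hu.neg.tangent_add_le fun z hz => neg_le_neg (abs_le.1 (hB z hz)).2
  rw [abs_le]
  constructor <;> linarith

section Landau

variable {x M B : ℝ} (hu : IsJetOn 3 u (Icc (x - 1) (x + 1)))
  (hM : ∀ y ∈ Icc (x - 1) (x + 1), |u 0 y| ≤ M)

include hu

lemma le_apply_sub_one (hB : ∀ y ∈ Icc (x - 1) (x + 1), u 3 y ≤ B) :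
    u 0 x - u 1 x + u 2 x / 2 - B / 6 ≤ u 0 (x - 1) := by
  have hsub : Icc (x - 1) x ⊆ Icc (x - 1) (x + 1) := Icc_subset_Icc_right (by linarith)
  have htaylor := (hu.mono le_rfl hsub).taylorSum_add_le_left (c := -B) (by linarith)
    fun y hy => by linarith [hB y (hsub hy)]
  norm_num [taylorSum, Finset.sum_range_succ, Nat.factorial] at htaylor
  linarith

lemma apply_add_one_le (hB : ∀ y ∈ Icc (x - 1) (x + 1), u 3 y ≤ B) :
    u 0 (x + 1) ≤ u 0 x + u 1 x + u 2 x / 2 + B / 6 := by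
  have hsub : Icc x (x + 1) ⊆ Icc (x - 1) (x + 1) := Icc_subset_Icc_left (by linarith)
  have htaylor := (hu.mono le_rfl hsub).neg.taylorSum_add_le (c := -B) (by linarith)
    fun y hy => neg_le_neg (hB y (hsub hy))
  norm_num [taylorSum, Finset.sum_range_succ, Nat.factorial] at htaylor
  linarith

include hM

lemma neg_add_le_deriv (hB : ∀ y ∈ Icc (x - 1) (x + 1), u 3 y ≤ B) : -(M + B / 6) ≤ u 1 x := by
  have hleft := abs_le.1 (hM (x - 1) ⟨le_rfl, by linarith⟩)
  have hright := abs_le.1 (hM (x + 1) ⟨by linarith, le_rfl⟩)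
  linarith [hu.le_apply_sub_one hB, hu.apply_add_one_le hB]

lemma abs_deriv_le (hB : ∀ y ∈ Icc (x - 1) (x + 1), |u 3 y| ≤ B) : |u 1 x| ≤ M + B / 6 := by
  have hlower := hu.neg_add_le_deriv hM fun y hy => (abs_le.1 (hB y hy)).2
  have hupper := hu.neg.neg_add_le_deriv (fun y hy => by simpa using hM y hy)
    fun y hy => neg_le.1 (abs_le.1 (hB y hy)).1
  exact abs_le.2 ⟨hlower, neg_le_neg_iff.1 hupper⟩

lemma abs_deriv_deriv_le (hB : ∀ y ∈ Icc (x - 1) (x + 1), |u 3 y| ≤ B) :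
    |u 2 x| ≤ 4 * M + B / 3 := by
  have hB₁ : ∀ y ∈ Icc (x - 1) (x + 1), u 3 y ≤ B := fun y hy => (abs_le.1 (hB y hy)).2
  have hB₂ : ∀ y ∈ Icc (x - 1) (x + 1), -u 3 y ≤ B := fun y hy => neg_le.1 (abs_le.1 (hB y hy)).1
  have hleft := abs_le.1 (hM (x - 1) ⟨le_rfl, by linarith⟩)
  have hmid := abs_le.1 (hM x ⟨by linarith, by linarith⟩)
  have hright := abs_le.1 (hM (x + 1) ⟨by linarith, le_rfl⟩)
  have hleft' := hu.neg.le_apply_sub_one hB₂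
  have hright' := hu.neg.apply_add_one_le hB₂
  rw [abs_le]
  constructor <;> linarith [hu.le_apply_sub_one hB₁, hu.apply_add_one_le hB₁]

end Landau

end IsJetOn

section Compactness

variable {ι : Type*} {U : Ultrafilter ι}

lemma exists_tendsto_ultrafilter {f : ι → ℝ} {A : ℝ} (hA : ∀ᶠ n in U, |f n| ≤ A) :
    ∃ y, Tendsto f U (𝓝 y) := by
  obtain ⟨y, -, hy⟩ := isCompact_Icc.ultrafilter_le_nhds (U.map f)
    (le_principal_iff.2 (hA.mono fun n hn => abs_le.1 hn))
  exact ⟨y, hy⟩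

lemma hasDerivAt_of_abs_sub_tangent_le {f : ℝ → ℝ} {f' x B : ℝ}
    (h : ∀ᶠ y in 𝓝 x, |f y - (f x + f' * (y - x))| ≤ B * (y - x) ^ 2) : HasDerivAt f f' x := by
  rw [hasDerivAt_iff_isLittleO]
  refine Asymptotics.IsBigO.trans_isLittleO (g := fun y => ‖y - x‖ ^ 2)
    (Asymptotics.IsBigO.of_bound B (h.mono fun y hy => ?_))
    (Asymptotics.isLittleO_pow_sub_sub x one_lt_two)
  rw [smul_eq_mul, Real.norm_eq_abs, Real.norm_eq_abs, Real.norm_eq_abs, sq_abs, abs_sq]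
  convert hy using 2
  ring

lemma exists_jet_limit {m : ℕ} {u : ι → ℕ → ℝ → ℝ}
    (hu : ∀ R : ℝ, ∃ A : ℝ, ∀ᶠ n in U, IsJetOn (m + 1) (u n) (Icc (-R) R) ∧
      ∀ i ≤ m + 1, ∀ x ∈ Icc (-R) R, |u n i x| ≤ A) :
    ∃ v : ℕ → ℝ → ℝ, IsJetOn m v univ ∧
      ∀ i ≤ m, ∀ x, Tendsto (fun n => u n i x) U (𝓝 (v i x)) := by
  have hlim : ∀ i x, ∃ y, i ≤ m → Tendsto (fun n => u n i x) U (𝓝 y) := by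
    intro i x
    obtain ⟨A, hA⟩ := hu |x|
    rcases le_or_gt i m with hi | hi
    · obtain ⟨y, hy⟩ := exists_tendsto_ultrafilter
        (hA.mono fun n hn => hn.2 i (by lia) x ⟨neg_abs_le x, le_abs_self x⟩)
      exact ⟨y, fun _ => hy⟩
    · exact ⟨0, fun h => absurd h hi.not_ge⟩
  choose v hv using hlim
  refine ⟨v, fun i hi x _ => ?_, fun i hi x => hv i x hi⟩
  obtain ⟨A, hA⟩ := hu (|x| + 1)
  have hx : x ∈ Ioo (-(|x| + 1)) (|x| + 1) :=
    ⟨by linarith [neg_abs_le x], by linarith [le_abs_self x]⟩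
  refine hasDerivAt_of_abs_sub_tangent_le (B := A / 2) ?_
  filter_upwards [Icc_mem_nhds hx.1 hx.2] with y hy
  have hxy : uIcc x y ⊆ Icc (-(|x| + 1)) (|x| + 1) :=
    ordConnected_Icc.uIcc_subset ⟨hx.1.le, hx.2.le⟩ hy
  rw [div_mul_eq_mul_div]
  refine le_of_tendsto ((hv i y hi.le).sub
    ((hv i x hi.le).add ((hv (i + 1) x hi).mul_const (y - x)))).abs (hA.mono fun n hn => ?_)
  have hjet : IsJetOn 2 (fun j => u n (i + j)) (uIcc x y) := fun j hj z hz =>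
    hn.1 (i + j) (by lia) z (hxy hz)
  exact hjet.abs_sub_tangent_le fun z hz => hn.2 (i + 2) (by lia) z (hxy hz)

end Compactness

/-! ### The energy of a jet -/

/-- The quantity `k k'' - k'² / 2`, whose derivative is `k k'''`; it controls the convexity of `k²`
through `(k²)'' = 2 (k k'' - k'² / 2) + 3 k'²`. -/
noncomputable def energy (k : ℕ → ℝ → ℝ) (x : ℝ) : ℝ := k 0 x * k 2 x - k 1 x ^ 2 / 2

/-- The 2-jet of the square of a function with jet `k`. -/
def squareJet (k : ℕ → ℝ → ℝ) : ℕ → ℝ → ℝ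
  | 0 => fun x => k 0 x ^ 2
  | 1 => fun x => 2 * (k 0 x * k 1 x)
  | _ => fun x => 2 * (k 1 x ^ 2 + k 0 x * k 2 x)

namespace IsJetOn

variable {k : ℕ → ℝ → ℝ} {s : Set ℝ} {x₀ C : ℝ}

lemma hasDerivAt_energy (hk : IsJetOn 3 k s) {x : ℝ} (hx : x ∈ s) :
    HasDerivAt (energy k) (k 0 x * k 3 x) x := by
  have hd := ((hk 0 (by simp) x hx).fun_mul (hk 2 (by simp) x hx)).fun_sub
    (((hk 1 (by simp) x hx).fun_pow 2).div_const 2)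
  exact hd.congr_deriv (by ring)

lemma square (hk : IsJetOn 2 k s) : IsJetOn 2 (squareJet k) s := by
  intro i hi x hx
  have h₀ := hk 0 (by simp) x hx
  interval_cases i
  · exact (h₀.fun_pow 2).congr_deriv (by simp only [squareJet]; ring)
  · exact ((h₀.fun_mul (hk 1 (by simp) x hx)).const_mul 2).congr_deriv
      (by simp only [squareJet]; ring)

lemma sq_sub_le_sq {y : ℝ} (hk : IsJetOn 2 k (uIcc x₀ y)) (hE : ∀ z ∈ uIcc x₀ y, -C ≤ energy k z)
    (hy : 0 ≤ k 0 x₀ * k 1 x₀ * (y - x₀)) : k 0 x₀ ^ 2 - C * (y - x₀) ^ 2 ≤ k 0 y ^ 2 := by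
  have hconvex := hk.square.tangent_add_le (c := -2 * C) fun z hz => by
    have hEz := hE z hz
    simp only [energy, squareJet] at hEz ⊢
    linarith [sq_nonneg (k 1 z)]
  simp only [squareJet] at hconvex
  linarith

lemma mul_le_energy_gap {T m c : ℝ} (hT : 0 ≤ T) (hk : IsJetOn 3 k (Icc (x₀ - T) (x₀ + T)))
    (hE : ∀ x ∈ Icc (x₀ - T) (x₀ + T), |energy k x| ≤ C) (hm : 0 ≤ m) (hx₀ : m ≤ |k 0 x₀|)
    (hCT : 4 * C * T ^ 2 ≤ 3 * m ^ 2)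
    (hc : ∀ x ∈ Icc (x₀ - T) (x₀ + T), m / 2 ≤ |k 0 x| → c ≤ k 0 x * k 3 x) : c * T ≤ 2 * C := by
  have hC : 0 ≤ C := (abs_nonneg _).trans (hE x₀ ⟨by linarith, by linarith⟩)
  obtain ⟨p, hp, hdir⟩ : ∃ p ∈ Icc (x₀ - T) x₀,
      ∀ y ∈ Icc p (p + T), 0 ≤ k 0 x₀ * k 1 x₀ * (y - x₀) := by
    rcases le_total 0 (k 0 x₀ * k 1 x₀) with h | h
    · exact ⟨x₀, ⟨by linarith, le_rfl⟩, fun y hy => mul_nonneg h (by linarith [hy.1])⟩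
    · exact ⟨x₀ - T, ⟨le_rfl, by linarith⟩,
        fun y hy => mul_nonneg_of_nonpos_of_nonpos h (by linarith [hy.2])⟩
  have hsub : Icc p (p + T) ⊆ Icc (x₀ - T) (x₀ + T) := Icc_subset_Icc hp.1 (by linarith [hp.2])
  have hlarge : ∀ y ∈ Icc p (p + T), m / 2 ≤ |k 0 y| := by
    intro y hy
    have hu : uIcc x₀ y ⊆ Icc (x₀ - T) (x₀ + T) :=
      ordConnected_Icc.uIcc_subset ⟨by linarith, by linarith⟩ (hsub hy)
    have hsq := (hk.mono (by simp) hu).sq_sub_le_sq (fun z hz => (abs_le.1 (hE z (hu hz))).1)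
      (hdir y hy)
    have hdist : (y - x₀) ^ 2 ≤ T ^ 2 :=
      sq_le_sq' (by linarith [(hsub hy).1]) (by linarith [(hsub hy).2])
    have hm₀ : m ^ 2 ≤ k 0 x₀ ^ 2 := by simpa using pow_le_pow_left₀ hm hx₀ 2
    refine (abs_of_nonneg (by linarith : 0 ≤ m / 2)).symm.trans_le (sq_le_sq.1 ?_)
    nlinarith [mul_le_mul_of_nonneg_left hdist hC]
  have hgrowth := mul_sub_le_sub_of_hasDerivAt (le_add_of_nonneg_right hT)
    (fun y hy => hk.hasDerivAt_energy (hsub hy)) fun y hy => hc y (hsub hy) (hlarge y hy)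
  have hleft := abs_le.1 (hE p (hsub ⟨le_rfl, by linarith⟩))
  have hright := abs_le.1 (hE (p + T) (hsub ⟨by linarith, le_rfl⟩))
  linarith

end IsJetOn

/-! ### A third-order boundary value problem -/

lemma exists_flow_of_norm_le {E : Type*} [NormedAddCommGroup E] [NormedSpace ℝ E] [CompleteSpace E]
    {f : ℝ → E → E} {a b t₀ : ℝ} {K M L : ℝ≥0} (ht₀ : t₀ ∈ Icc a b)
    (hlip : ∀ t ∈ Icc a b, LipschitzWith K (f t)) (hcont : ∀ x, ContinuousOn (f · x) (Icc a b))
    (hbound : ∀ t ∈ Icc a b, ∀ x, ‖f t x‖ ≤ M * ‖x‖ + L) (hM : M * (b - a) < 1) (ρ : ℝ≥0) :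
    ∃ α : E → ℝ → E,
      (∀ x ∈ Metric.closedBall 0 ρ, α x t₀ = x ∧
        ∀ t ∈ Icc a b, HasDerivWithinAt (α x) (f t (α x t)) (Icc a b) t) ∧
      ∀ t ∈ Icc a b, ContinuousOn (α · t) (Metric.closedBall 0 ρ) := by
  have hab : 0 ≤ b - a := sub_nonneg.2 (ht₀.1.trans ht₀.2)
  have hpos : 0 < 1 - M * (b - a) := sub_pos.2 hM
  -- solutions starting in the ball of radius `ρ` do not leave the ball of this radius `A`
  obtain ⟨A, hA⟩ : ∃ A : ℝ≥0, (M * A + L) * (b - a) = (A - ρ : ℝ) := by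
    refine ⟨.mk ((ρ + L * (b - a)) / (1 - M * (b - a))) (by positivity), ?_⟩
    rw [NNReal.coe_mk]
    field_simp
    ring
  have hPL : IsPicardLindelof f ⟨t₀, ht₀⟩ 0 A ρ (M * A + L) K := by
    refine ⟨fun t ht => (hlip t ht).lipschitzOnWith, fun x _ => hcont x, fun t ht x hx => ?_, ?_⟩
    · push_cast
      refine (hbound t ht x).trans ?_
      gcongr
      simpa using hx
    · push_cast
      rw [← hA]
      gcongr
      exact max_le (by linarith [ht₀.1]) (by linarith [ht₀.2])
  obtain ⟨α, hα, L', hL'⟩ := hPL.exists_forall_mem_closedBall_eq_hasDerivWithinAt_lipschitzOnWith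
  exact ⟨α, hα, fun t ht => (hL' t ht).continuousOn⟩

/-- The equation `u''' = F t u` as a first-order system for `(u, u' / l, u'' / l²)`. For small `l`
its linear growth rate is small, so that it can be solved on a given interval in one step. -/
noncomputable def scaledSystem (F : ℝ → ℝ → ℝ) (l t : ℝ) (w : ℝ × ℝ × ℝ) : ℝ × ℝ × ℝ :=
  (l * w.2.1, l * w.2.2, (l ^ 2)⁻¹ * F t w.1)

/-- The jet of `u` read off from a solution of `scaledSystem`. -/
noncomputable def systemJet (F : ℝ → ℝ → ℝ) (l : ℝ) (w : ℝ → ℝ × ℝ × ℝ) : ℕ → ℝ → ℝ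
  | 0 => fun t => (w t).1
  | 1 => fun t => l * (w t).2.1
  | 2 => fun t => l ^ 2 * (w t).2.2
  | _ => fun t => F t (w t).1

section ThirdOrder

variable {F : ℝ → ℝ → ℝ} {l : ℝ} {K : ℝ≥0}

lemma exists_lipschitzWith_scaledSystem (hF : ∀ t, LipschitzWith K (F t)) (l : ℝ) :
    ∃ K', ∀ t, LipschitzWith K' (scaledSystem F l t) :=
  ⟨_, fun t => ((lipschitzWith_smul l).comp (.comp .prod_fst .prod_snd)).prodMk
    (((lipschitzWith_smul l).comp (.comp .prod_snd .prod_snd)).prodMk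
      ((lipschitzWith_smul (l ^ 2)⁻¹).comp ((hF t).comp LipschitzWith.prod_fst)))⟩

lemma norm_scaledSystem_le {t B : ℝ} {w : ℝ × ℝ × ℝ} (hl : 0 < l) (hB : |F t w.1| ≤ B) :
    ‖scaledSystem F l t w‖ ≤ l * ‖w‖ + (l ^ 2)⁻¹ * B := by
  have hB₀ : 0 ≤ B := (abs_nonneg _).trans hB
  have h₁ : ‖w.2.1‖ ≤ ‖w‖ := (norm_fst_le w.2).trans (norm_snd_le w)
  have h₂ : ‖w.2.2‖ ≤ ‖w‖ := (norm_snd_le w.2).trans (norm_snd_le w)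
  simp only [scaledSystem, Prod.norm_mk, norm_mul, norm_inv, norm_pow, Real.norm_of_nonneg hl.le]
  refine max_le (le_add_of_le_of_nonneg (by gcongr) (by positivity))
    (max_le (le_add_of_le_of_nonneg (by gcongr) (by positivity))
      (le_add_of_nonneg_of_le (by positivity) (by gcongr; exact hB)))

lemma isJetOn_systemJet {w : ℝ → ℝ × ℝ × ℝ} {s : Set ℝ} (hl : l ≠ 0)
    (hw : ∀ t ∈ s, HasDerivAt w (scaledSystem F l t (w t)) t) :
    IsJetOn 3 (systemJet F l w) s := by
  intro i hi t ht
  have h₀ : HasDerivAt (fun t => (w t).1) (l * (w t).2.1) t := (hw t ht).fst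
  have h₁ : HasDerivAt (fun t => (w t).2.1) (l * (w t).2.2) t := (hw t ht).snd.fst
  have h₂ : HasDerivAt (fun t => (w t).2.2) ((l ^ 2)⁻¹ * F t (w t).1) t := (hw t ht).snd.snd
  interval_cases i
  · exact h₀
  · exact (h₁.const_mul l).congr_deriv (by simp only [systemJet]; ring)
  · exact (h₂.const_mul (l ^ 2)).congr_deriv (by simp only [systemJet]; field_simp)

lemma exists_third_order_flow {t₀ t₁ B : ℝ} (h : t₀ ≤ t₁) (hcont : ∀ y, Continuous (F · y))
    (hlip : ∀ t, LipschitzWith K (F t)) (hB : ∀ t ∈ Icc (t₀ - 1) (t₁ + 1), ∀ y, |F t y| ≤ B)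
    (p q S : ℝ) :
    ∃ u : ℝ → ℕ → ℝ → ℝ,
      (∀ s ∈ Icc (-S) S, IsJetOn 3 (u s) (Icc t₀ t₁) ∧ (∀ t, u s 3 t = F t (u s 0 t)) ∧
        u s 0 t₀ = p ∧ u s 1 t₀ = q ∧ u s 2 t₀ = s) ∧
      ContinuousOn (fun s => u s 0 t₁) (Icc (-S) S) := by
  obtain ⟨l, hl₀, hl⟩ : ∃ l : ℝ≥0, (0 : ℝ) < l ∧ l * (t₁ + 1 - (t₀ - 1)) < 1 := by
    refine ⟨.mk (2 * (t₁ - t₀ + 2))⁻¹ (inv_nonneg.2 (by linarith)), inv_pos.2 (by linarith), ?_⟩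
    rw [NNReal.coe_mk, inv_mul_lt_iff₀ (by linarith)]
    linarith
  have hB₀ : 0 ≤ B := (abs_nonneg _).trans (hB t₀ ⟨by linarith, by linarith⟩ 0)
  set init : ℝ → ℝ × ℝ × ℝ := fun s => (p, (l : ℝ)⁻¹ * q, ((l : ℝ) ^ 2)⁻¹ * s) with hinit
  have hinit_cont : Continuous init := by fun_prop
  obtain ⟨ρ, hρ⟩ := isCompact_Icc.exists_bound_of_continuousOn (s := Icc (-S) S)
    hinit_cont.continuousOn
  have hball : MapsTo init (Icc (-S) S) (Metric.closedBall 0 ρ.toNNReal) := fun s hs =>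
    mem_closedBall_zero_iff.2 ((hρ s hs).trans (Real.le_coe_toNNReal ρ))
  obtain ⟨K', hK'⟩ := exists_lipschitzWith_scaledSystem hlip (l : ℝ)
  obtain ⟨α, hα, hα_cont⟩ := exists_flow_of_norm_le (f := scaledSystem F l) (a := t₀ - 1)
    (b := t₁ + 1) (t₀ := t₀) (L := .mk (((l : ℝ) ^ 2)⁻¹ * B) (by positivity))
    ⟨by linarith, by linarith⟩ (fun t _ => hK' t)
    (fun w => by have := hcont w.1; unfold scaledSystem; fun_prop)
    (fun t ht w => norm_scaledSystem_le hl₀ (hB t ht w.1))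
    hl ρ.toNNReal
  refine ⟨fun s => systemJet F l (α (init s)), fun s hs => ?_, ?_⟩
  · obtain ⟨hstart, hderiv⟩ := hα _ (hball hs)
    refine ⟨isJetOn_systemJet hl₀.ne' fun t ht => ?_, fun t => rfl, ?_⟩
    · exact (hderiv t ⟨by linarith [ht.1], by linarith [ht.2]⟩).hasDerivAt
        (Icc_mem_nhds (by linarith [ht.1]) (by linarith [ht.2]))
    · simp only [systemJet, hstart]
      simp only [hinit, mul_inv_cancel_left₀ hl₀.ne',
        mul_inv_cancel_left₀ (pow_pos hl₀ 2).ne', and_self]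
  · exact continuous_fst.comp_continuousOn
      ((hα_cont t₁ ⟨by linarith, by linarith⟩).comp hinit_cont.continuousOn hball)

theorem exists_jet_solving_boundary_value_problem {t₀ t₁ B : ℝ} (h : t₀ < t₁)
    (hcont : ∀ y, Continuous (F · y)) (hlip : ∀ t, LipschitzWith K (F t))
    (hB : ∀ t ∈ Icc (t₀ - 1) (t₁ + 1), ∀ y, |F t y| ≤ B) (p q r : ℝ) :
    ∃ u : ℕ → ℝ → ℝ, IsJetOn 3 u (Icc t₀ t₁) ∧ (∀ t, u 3 t = F t (u 0 t)) ∧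
      u 0 t₀ = p ∧ u 1 t₀ = q ∧ u 0 t₁ = r := by
  set T := t₁ - t₀
  have hT : 0 < T := sub_pos.2 h
  set S := 2 * (|r - p - q * T| + B * T ^ 3 / 6) / T ^ 2
  have hS : S * T ^ 2 / 2 = |r - p - q * T| + B * T ^ 3 / 6 := by simp only [S]; field_simp
  have hB₀ : 0 ≤ B := (abs_nonneg _).trans (hB t₀ ⟨by linarith, by linarith⟩ 0)
  have hS₀ : 0 ≤ S := by positivity
  obtain ⟨u, hu, hu_cont⟩ := exists_third_order_flow h.le hcont hlip hB p q S
  have htaylor : ∀ s ∈ Icc (-S) S, |u s 0 t₁ - (p + q * T + s * T ^ 2 / 2)| ≤ B * T ^ 3 / 6 := by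
    intro s hs
    obtain ⟨hjet, hode, hp, hq, hs'⟩ := hu s hs
    have hB' : ∀ t ∈ Icc t₀ t₁, |u s 3 t| ≤ B := fun t ht =>
      hode t ▸ hB t ⟨by linarith [ht.1], by linarith [ht.2]⟩ _
    have hlower := hjet.taylorSum_add_le h.le fun t ht => (abs_le.1 (hB' t ht)).1
    have hupper := hjet.neg.taylorSum_add_le h.le fun t ht => neg_le_neg (abs_le.1 (hB' t ht)).2
    norm_num [taylorSum, Finset.sum_range_succ, Nat.factorial, hp, hq, hs'] at hlower hupper
    rw [abs_le]
    constructor <;> linarith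
  have hr : r ∈ Icc (u (-S) 0 t₁) (u S 0 t₁) := by
    have hleft := abs_le.1 (htaylor (-S) ⟨le_rfl, by linarith⟩)
    have hright := abs_le.1 (htaylor S ⟨by linarith, le_rfl⟩)
    have habs := abs_le.1 (le_refl |r - p - q * T|)
    constructor <;> linarith
  obtain ⟨s, hs, hsr⟩ := intermediate_value_Icc (by linarith) hu_cont hr
  obtain ⟨hjet, hode, hp, hq, -⟩ := hu s hs
  exact ⟨u s, hjet, hode, hp, hq, hsr⟩

end ThirdOrder

/-! ### The profile -/

/-- The positive solution of `(1 + x²) y³ = 1`: a smooth function with the behaviour `|x| ^ (-2/3)`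
at infinity. -/
noncomputable def farField (x : ℝ) : ℝ := (1 + x ^ 2) ^ (-(1 / 3 : ℝ))

lemma farField_pos (x : ℝ) : 0 < farField x := Real.rpow_pos_of_pos (by positivity) _

lemma farField_cube_mul (x : ℝ) : farField x ^ 3 * (1 + x ^ 2) = 1 := by
  have hx : 0 < 1 + x ^ 2 := by positivity
  rw [farField, ← Real.rpow_natCast, ← Real.rpow_mul hx.le]
  norm_num [Real.rpow_neg_one, hx.ne']

lemma farField_le_mul {x y c : ℝ} (hc : 0 ≤ c) (h : 1 + y ^ 2 ≤ c ^ 3 * (1 + x ^ 2)) :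
    farField x ≤ c * farField y := by
  have hx := farField_cube_mul x
  have hy := farField_cube_mul y
  have hy₀ := farField_pos y
  refine le_of_pow_le_pow_left₀ three_ne_zero (by positivity) ?_
  refine le_of_mul_le_mul_right ?_ (by positivity : 0 < 1 + x ^ 2)
  calc farField x ^ 3 * (1 + x ^ 2) = farField y ^ 3 * (1 + y ^ 2) := by rw [hx, hy]
    _ ≤ farField y ^ 3 * (c ^ 3 * (1 + x ^ 2)) := by gcongr
    _ = (c * farField y) ^ 3 * (1 + x ^ 2) := by ring

lemma farField_le_one (x : ℝ) : farField x ≤ 1 :=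
  Real.rpow_le_one_of_one_le_of_nonpos (by linarith [sq_nonneg x]) (by norm_num)

lemma farField_le_two_mul {x y : ℝ} (h : |y - x| ≤ 1) : farField x ≤ 2 * farField y := by
  refine farField_le_mul zero_le_two ?_
  nlinarith [sq_le_sq' (abs_le.1 h).1 (abs_le.1 h).2, sq_nonneg (y - 2 * x)]

lemma tendsto_farField_cocompact : Tendsto farField (cocompact ℝ) (𝓝 0) := by
  have hsq : Tendsto (fun x : ℝ => 1 + x ^ 2) (cocompact ℝ) atTop := by
    refine tendsto_atTop_add_const_left _ _ ?_
    simpa [Function.comp_def] using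
      (tendsto_pow_atTop two_ne_zero).comp (tendsto_norm_cocompact_atTop (E := ℝ))
  exact (tendsto_rpow_neg_atTop (by norm_num : (0 : ℝ) < 1 / 3)).comp hsq

lemma abs_rpow_mul_farField (x : ℝ) :
    |x| ^ ((2 : ℝ) / 3) * farField x = (1 - farField x ^ 3) ^ ((1 : ℝ) / 3) := by
  have hcube : 1 - farField x ^ 3 = |x| ^ (2 : ℝ) * farField x ^ (3 : ℝ) := by
    have h := farField_cube_mul x
    norm_num
    linarith
  rw [hcube, Real.mul_rpow (by positivity) (Real.rpow_nonneg (farField_pos x).le _),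
    ← Real.rpow_mul (abs_nonneg x), ← Real.rpow_mul (farField_pos x).le]
  norm_num

lemma tendsto_abs_rpow_mul_farField :
    Tendsto (fun x => |x| ^ ((2 : ℝ) / 3) * farField x) (cocompact ℝ) (𝓝 1) := by
  simp only [abs_rpow_mul_farField]
  have h := ((tendsto_farField_cocompact.pow 3).const_sub 1).rpow_const (p := 1 / 3) (by norm_num)
  simpa using h

lemma hasDerivAt_farField (x : ℝ) : HasDerivAt farField (-(2 / 3) * x * farField x ^ 4) x := by
  have hx : 0 < 1 + x ^ 2 := by positivity
  have hd := (((hasDerivAt_id x).fun_pow 2).const_add 1).rpow_const (p := -(1 / 3 : ℝ))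
    (Or.inl hx.ne')
  refine hd.congr_deriv ?_
  have h4 : farField x ^ 4 = (1 + x ^ 2) ^ (-(1 / 3 : ℝ) - 1) := by
    rw [farField, ← Real.rpow_natCast, ← Real.rpow_mul hx.le]
    norm_num
  rw [h4]
  simp only [id]
  ring

/-- The 3-jet of `farField ^ k`; by `(1 + x²) φ³ = 1` all powers `x²` can be eliminated. -/
noncomputable def farFieldPowJet (k : ℕ) : ℕ → ℝ → ℝ
  | 0 => fun x => farField x ^ k
  | 1 => fun x => -(2 / 3) * k * x * farField x ^ (k + 3)
  | 2 => fun x => (4 / 9 * k ^ 2 + 2 / 3 * k) * farField x ^ (k + 3)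
      - 4 / 9 * k * (k + 3) * farField x ^ (k + 6)
  | _ => fun x => -(2 / 3) * x * farField x ^ (k + 6) *
      ((k + 3) * (4 / 9 * k ^ 2 + 2 / 3 * k) - (k + 6) * (4 / 9 * k * (k + 3)) * farField x ^ 3)

lemma isJetOn_farFieldPowJet (k : ℕ) : IsJetOn 3 (farFieldPowJet k) univ := by
  have hpow : ∀ (j : ℕ) (x : ℝ),
      HasDerivAt (fun y => farField y ^ j) (-(2 / 3) * j * x * farField x ^ (j + 3)) x := by
    intro j x
    refine ((hasDerivAt_farField x).fun_pow j).congr_deriv ?_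
    rcases j with _ | j
    · simp
    · push_cast
      ring
  intro i hi x _
  interval_cases i
  · exact hpow k x
  · refine (((hasDerivAt_id x).const_mul (-(2 / 3) * k : ℝ)).mul (hpow (k + 3) x)).congr_deriv ?_
    simp only [farFieldPowJet, id]
    push_cast
    linear_combination
      (4 / 9 * k * (k + 3) * farField x ^ (k + 3)) * farField_cube_mul x
  · refine (((hpow (k + 3) x).const_mul (4 / 9 * k ^ 2 + 2 / 3 * k : ℝ)).sub
      ((hpow (k + 6) x).const_mul (4 / 9 * k * (k + 3) : ℝ))).congr_deriv ?_
    simp only [farFieldPowJet]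
    push_cast
    ring

lemma continuous_farFieldPowJet_three (k : ℕ) : Continuous (farFieldPowJet k 3) := by
  have hc : Continuous farField :=
    continuous_iff_continuousAt.2 fun x => (hasDerivAt_farField x).continuousAt
  unfold farFieldPowJet
  fun_prop

lemma exists_abs_farFieldPowJet_three_le (k : ℕ) : ∃ B, ∀ x, |farFieldPowJet k 3 x| ≤ B := by
  refine ⟨2 / 3 * 1 * 1 * (|(k + 3) * (4 / 9 * k ^ 2 + 2 / 3 * k : ℝ)|
    + |(k + 6) * (4 / 9 * k * (k + 3) : ℝ)| * 1), fun x => ?_⟩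
  have hφ : |farField x| ≤ 1 := (abs_of_pos (farField_pos x)).trans_le (farField_le_one x)
  have hpow : ∀ j : ℕ, |farField x| ^ j ≤ 1 := fun j => pow_le_one₀ (abs_nonneg _) hφ
  have hx : |x| * |farField x| ^ 3 ≤ 1 := by
    have h := farField_cube_mul x
    rw [abs_of_pos (farField_pos x)]
    have h₁ : |x| ≤ 1 + x ^ 2 := by nlinarith [sq_abs x, sq_nonneg (|x| - 1), abs_nonneg x]
    calc |x| * farField x ^ 3 ≤ (1 + x ^ 2) * farField x ^ 3 := by
          have := farField_pos x
          gcongr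
      _ = 1 := by linarith
  calc |farFieldPowJet k 3 x|
      = 2 / 3 * (|x| * |farField x| ^ 3) * |farField x| ^ (k + 3) *
        |(k + 3) * (4 / 9 * k ^ 2 + 2 / 3 * k) -
          (k + 6) * (4 / 9 * k * (k + 3)) * farField x ^ 3| := by
        simp only [farFieldPowJet, abs_mul, abs_neg, abs_pow]
        rw [abs_of_pos (by norm_num : (0 : ℝ) < 2 / 3)]
        ring
    _ ≤ _ := by
        gcongr
        · exact hpow _
        · refine (abs_sub _ _).trans ?_
          rw [abs_mul _ (farField x ^ 3), abs_pow]
          gcongr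
          exact hpow 3

/-- A reference jet `κ` for the far-field behaviour: `κ 0` exceeds `farField` by at most
`D * farField ^ 4`, and the forcing `x ^ 2 + a - κ'''` it leaves in the equation for the deviation
`K - κ` is at least `1`. The same constant `D` also bounds `κ'''`. -/
structure IsProfile (a D : ℝ) (κ : ℕ → ℝ → ℝ) : Prop where
  isJetOn : IsJetOn 3 κ univ
  farField_le : ∀ x, farField x ≤ κ 0 x
  le_farField_add : ∀ x, κ 0 x ≤ farField x + D * farField x ^ 4
  abs_three_le : ∀ x, |κ 3 x| ≤ D
  one_le_forcing : ∀ x, 1 ≤ x ^ 2 + a - κ 3 x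

lemma exists_mul_rescale_le_sq_sub {g : ℝ → ℝ} {y₀ B : ℝ} (hg : ContinuousAt g y₀)
    (hB : ∀ y, |g y| ≤ B) (hy₀ : g y₀ < 0) (M : ℝ) :
    ∃ c l : ℝ, 0 ≤ c ∧ 0 < l ∧ ∀ x, c * g (l⁻¹ * x + y₀) ≤ x ^ 2 - M := by
  obtain ⟨δ, hδ, hneg⟩ := Metric.continuousAt_iff.1 hg (-g y₀ / 2) (by linarith)
  have hB₀ : 0 ≤ B := (abs_nonneg _).trans (hB y₀)
  set c := 2 * |M| / -g y₀
  have hc : 0 ≤ c := div_nonneg (by positivity) (by linarith)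
  obtain ⟨l, hl, hlarge⟩ : ∃ l : ℝ, 0 < l ∧ c * B + |M| ≤ (δ * l) ^ 2 := by
    refine ⟨δ⁻¹ * (1 + (c * B + |M|)), by positivity, ?_⟩
    rw [mul_inv_cancel_left₀ hδ.ne']
    nlinarith [show 0 ≤ c * B + |M| by positivity]
  refine ⟨c, l, hc, hl, fun x => ?_⟩
  have hM := le_abs_self M
  rcases lt_or_ge |l⁻¹ * x| δ with hx | hx
  · have hclose : g (l⁻¹ * x + y₀) ≤ g y₀ / 2 := by
      have := hneg (x := l⁻¹ * x + y₀) (by simpa [Real.dist_eq] using hx)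
      rw [Real.dist_eq] at this
      linarith [(abs_lt.1 this).2]
    calc c * g (l⁻¹ * x + y₀) ≤ c * (g y₀ / 2) := by gcongr
      _ = -|M| := by
        simp only [c]
        field_simp [hy₀.ne]
      _ ≤ x ^ 2 - M := by linarith [sq_nonneg x]
  · have hx' : (δ * l) ^ 2 ≤ x ^ 2 := by
      rw [abs_mul, abs_of_pos (inv_pos.2 hl), le_inv_mul_iff₀ hl] at hx
      simpa [mul_comm] using pow_le_pow_left₀ (by positivity) hx 2
    calc c * g (l⁻¹ * x + y₀) ≤ c * B := by gcongr; exact (le_abs_self _).trans (hB _)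
      _ ≤ x ^ 2 - M := by linarith

lemma exists_farField_rescale_le {l : ℝ} (hl : 0 < l) :
    ∃ C, 0 ≤ C ∧ ∀ x, farField (l⁻¹ * x + 1) ≤ C * farField x := by
  refine ⟨1 + 2 * l ^ 2, by positivity, fun x => farField_le_mul (by positivity) ?_⟩
  obtain ⟨z, rfl⟩ : ∃ z, x = l * (z - 1) := ⟨l⁻¹ * x + 1, by field_simp; ring⟩
  rw [inv_mul_cancel_left₀ hl.ne', sub_add_cancel]
  calc 1 + (l * (z - 1)) ^ 2 ≤ (1 + 2 * l ^ 2) * (1 + z ^ 2) := by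
        nlinarith [mul_nonneg (sq_nonneg l) (sq_nonneg (z + 1)), sq_nonneg z]
    _ ≤ (1 + 2 * l ^ 2) ^ 3 * (1 + z ^ 2) := by
        gcongr
        exact le_self_pow₀ (by nlinarith [sq_nonneg l]) three_ne_zero

lemma farFieldPowJet_six_three_one_neg : farFieldPowJet 6 3 1 < 0 := by
  have hφ : farField 1 ^ 3 = 1 / 2 := by linarith [farField_cube_mul 1]
  have := farField_pos 1
  simp only [farFieldPowJet, hφ]
  norm_num
  positivity

/-- Near `1` the third derivative of `farField ^ 6` is negative, so a large multiple of a wide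
rescaling of it is very negative where `x ^ 2 < M` and remains bounded elsewhere. -/
lemma exists_corrector (M : ℝ) :
    ∃ (q : ℕ → ℝ → ℝ) (D : ℝ), IsJetOn 3 q univ ∧ ∀ x,
      0 ≤ q 0 x ∧ q 0 x ≤ D * farField x ^ 4 ∧ |q 3 x| ≤ D ∧ q 3 x ≤ x ^ 2 - M := by
  obtain ⟨B, hB⟩ := exists_abs_farFieldPowJet_three_le 6
  have hB₀ : 0 ≤ B := (abs_nonneg _).trans (hB 0)
  obtain ⟨c, l, hc, hl, hcorr⟩ := exists_mul_rescale_le_sq_sub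
    (continuous_farFieldPowJet_three 6).continuousAt hB farFieldPowJet_six_three_one_neg M
  obtain ⟨C, _, hφC⟩ := exists_farField_rescale_le hl
  set q : ℕ → ℝ → ℝ := fun i x => c * l ^ 3 * (l⁻¹ ^ i * farFieldPowJet 6 i (l⁻¹ * x + 1)) with hq
  have hq₀ : ∀ x, q 0 x = c * l ^ 3 * farField (l⁻¹ * x + 1) ^ 6 := by simp [hq, farFieldPowJet]
  have hq₃ : q 3 = fun x => c * farFieldPowJet 6 3 (l⁻¹ * x + 1) := by
    funext x
    simp only [hq]
    field_simp
  refine ⟨q, c * l ^ 3 * C ^ 6 + c * B,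
    ((isJetOn_farFieldPowJet 6).comp_affine l⁻¹ 1).const_mul _, fun x => ⟨?_, ?_, ?_, ?_⟩⟩
  · have := farField_pos (l⁻¹ * x + 1)
    rw [hq₀]
    positivity
  · have hφ := farField_pos x
    calc q 0 x ≤ c * l ^ 3 * (C * farField x) ^ 6 := by
          rw [hq₀]
          gcongr
          exacts [(farField_pos _).le, hφC x]
      _ = c * l ^ 3 * C ^ 6 * farField x ^ 6 := by ring
      _ ≤ (c * l ^ 3 * C ^ 6 + c * B) * farField x ^ 4 :=
          mul_le_mul (le_add_of_nonneg_right (by positivity))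
            (pow_le_pow_of_le_one hφ.le (farField_le_one x) (by simp)) (by positivity)
            (by positivity)
  · rw [hq₃, abs_mul, abs_of_nonneg hc]
    exact (mul_le_mul_of_nonneg_left (hB _) hc).trans (le_add_of_nonneg_left (by positivity))
  · exact hq₃ ▸ hcorr x

theorem exists_isProfile (a : ℝ) : ∃ D κ, IsProfile a D κ := by
  obtain ⟨B, hB⟩ := exists_abs_farFieldPowJet_three_le 1
  obtain ⟨q, D, hq, hqD⟩ := exists_corrector (1 + B - a)
  have hB₀ : 0 ≤ B := (abs_nonneg _).trans (hB 0)
  refine ⟨D + B, fun i x => farFieldPowJet 1 i x + q i x,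
    (isJetOn_farFieldPowJet 1).add hq, fun x => ?_, fun x => ?_, fun x => ?_, fun x => ?_⟩ <;>
    obtain ⟨hnonneg, hdecay, hbound, hupper⟩ := hqD x
  · simpa only [farFieldPowJet, pow_one] using le_add_of_nonneg_right hnonneg
  · simp only [farFieldPowJet, pow_one]
    have := mul_nonneg hB₀ (pow_nonneg (farField_pos x).le 4)
    linarith
  · exact (abs_add_le _ _).trans (by linarith [hB x])
  · linarith [(abs_le.1 (hB x)).2]

namespace IsProfile

variable {a D : ℝ} {κ : ℕ → ℝ → ℝ} (h : IsProfile a D κ)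
include h

lemma pos (x : ℝ) : 0 < κ 0 x := (farField_pos x).trans_le (h.farField_le x)

lemma const_nonneg : 0 ≤ D := (abs_nonneg _).trans (h.abs_three_le 0)

lemma le_mul_farField (x : ℝ) : κ 0 x ≤ (1 + D) * farField x := by
  have hφ := farField_pos x
  have hpow : farField x ^ 4 ≤ farField x := pow_le_of_le_one hφ.le (farField_le_one x) (by simp)
  linarith [h.le_farField_add x, mul_le_mul_of_nonneg_left hpow h.const_nonneg]

lemma exists_abs_residual_le :
    ∃ C, 0 ≤ C ∧ ∀ x, |κ 0 x ^ 3 * (x ^ 2 + a - κ 3 x) - 1| ≤ C * farField x ^ 3 := by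
  have hD := h.const_nonneg
  set b := 1 + D
  refine ⟨3 * D * b ^ 2 + b ^ 3 * (|a - 1| + D), by positivity, fun x => ?_⟩
  have hφ := farField_pos x
  have hκ := h.pos x
  have hle := h.le_mul_farField x
  have hφ3 := farField_cube_mul x
  have hsplit : κ 0 x ^ 3 * (x ^ 2 + a - κ 3 x) - 1
      = (κ 0 x - farField x) * (κ 0 x ^ 2 + κ 0 x * farField x + farField x ^ 2) * (1 + x ^ 2)
        + κ 0 x ^ 3 * ((a - 1) - κ 3 x) := by linear_combination hφ3
  have hdiff : 0 ≤ κ 0 x - farField x := sub_nonneg.2 (h.farField_le x)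
  have hfirst : (κ 0 x - farField x) * (κ 0 x ^ 2 + κ 0 x * farField x + farField x ^ 2)
      * (1 + x ^ 2) ≤ 3 * D * b ^ 2 * farField x ^ 3 := by
    calc _ ≤ (D * farField x ^ 4) * ((b * farField x) ^ 2 + (b * farField x) * (b * farField x)
          + (b * farField x) ^ 2) * (1 + x ^ 2) := by
          gcongr
          · linarith [h.le_farField_add x]
          · exact (h.farField_le x).trans hle
          · exact (h.farField_le x).trans hle
      _ = 3 * D * b ^ 2 * farField x ^ 3 := by
          linear_combination 3 * D * b ^ 2 * farField x ^ 3 * hφ3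
  have hsecond : |κ 0 x ^ 3 * ((a - 1) - κ 3 x)| ≤ b ^ 3 * (|a - 1| + D) * farField x ^ 3 := by
    calc |κ 0 x ^ 3 * ((a - 1) - κ 3 x)| = κ 0 x ^ 3 * |(a - 1) - κ 3 x| := by
          rw [abs_mul, abs_of_pos (by positivity)]
      _ ≤ (b * farField x) ^ 3 * (|a - 1| + D) := by
          gcongr
          exact (abs_sub _ _).trans (by gcongr; exact h.abs_three_le x)
      _ = _ := by ring
  rw [hsplit]
  refine (abs_add_le _ _).trans ?_
  rw [abs_of_nonneg (by positivity)]
  linarith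

end IsProfile

/-! ### The truncated equation -/

/-- The nonlinearity `y⁻³`, frozen for `y ≤ ε` so as to be bounded and Lipschitz on all of `ℝ`. -/
noncomputable def invCube (ε y : ℝ) : ℝ := 1 / max y ε ^ 3

lemma invCube_pos {ε : ℝ} (hε : 0 < ε) (y : ℝ) : 0 < invCube ε y := by
  have := hε.trans_le (le_max_right y ε)
  unfold invCube
  positivity

lemma invCube_le {ε m y : ℝ} (hm : 0 < m) (h : m ≤ max y ε) : invCube ε y ≤ 1 / m ^ 3 := by
  unfold invCube
  gcongr

lemma le_invCube {ε m y : ℝ} (hε : 0 < ε) (hεm : ε ≤ m) (hym : y ≤ m) :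
    1 / m ^ 3 ≤ invCube ε y := by
  have := hε.trans_le (le_max_right y ε)
  unfold invCube
  gcongr
  exact max_le hym hεm

lemma lipschitzWith_invCube {ε : ℝ} (hε : 0 < ε) :
    LipschitzWith (.mk (3 / ε ^ 4) (by positivity)) (invCube ε) := by
  refine LipschitzWith.of_dist_le_mul fun x y => ?_
  rw [NNReal.coe_mk, Real.dist_eq, Real.dist_eq]
  unfold invCube
  have hdist := abs_max_sub_max_le_abs x y ε
  have hx : ε ≤ max x ε := le_max_right x ε
  have hy : ε ≤ max y ε := le_max_right y ε
  set X := max x ε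
  set Y := max y ε
  have hX : 0 < X := hε.trans_le hx
  have hY : 0 < Y := hε.trans_le hy
  calc |1 / X ^ 3 - 1 / Y ^ 3|
      = |(1 / (X * Y ^ 3) + 1 / (X ^ 2 * Y ^ 2) + 1 / (X ^ 3 * Y)) * (Y - X)| := by
        congr 1
        field_simp
        ring
    _ = (1 / (X * Y ^ 3) + 1 / (X ^ 2 * Y ^ 2) + 1 / (X ^ 3 * Y)) * |X - Y| := by
        rw [abs_mul, abs_of_pos (by positivity), abs_sub_comm]
    _ ≤ (1 / (ε * ε ^ 3) + 1 / (ε ^ 2 * ε ^ 2) + 1 / (ε ^ 3 * ε)) * |x - y| := by gcongr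
    _ = 3 / ε ^ 4 * |x - y| := by
        field_simp
        ring

lemma mul_abs_sub_one_le_mul_one_sub_invCube {y η : ℝ} (hη : 0 < η) (hη' : η ≤ 1 / 2) :
    min |y - 1| 1 * |y - 1| / 2 ≤ (y - 1) * (1 - invCube η y) := by
  set m := min |y - 1| 1
  have hm_abs : m ≤ |y - 1| := min_le_left _ _
  have hm_one : m ≤ 1 := min_le_right _ _
  have hm₀ : 0 ≤ m := le_min (abs_nonneg _) zero_le_one
  rcases le_total 1 y with hy | hy
  · rw [abs_of_nonneg (sub_nonneg.2 hy)] at hm_abs ⊢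
    have hG : invCube η y ≤ 1 - m / 2 := by
      refine (invCube_le (by linarith : 0 < 1 + m) (le_max_of_le_left (by linarith))).trans ?_
      rw [div_le_iff₀ (pow_pos (by linarith) 3)]
      have : 1 + m ≤ (1 + m) ^ 3 := le_self_pow₀ (by linarith) three_ne_zero
      nlinarith
    nlinarith
  · rw [abs_of_nonpos (sub_nonpos.2 hy)] at hm_abs ⊢
    have hG : 1 + m / 2 ≤ invCube η y := by
      refine le_trans ?_ (le_invCube (m := 1 - m / 2) hη (by linarith) (by linarith))
      rw [le_div_iff₀ (pow_pos (by linarith) 3)]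
      have : (1 - m / 2) ^ 3 ≤ 1 - m / 2 := pow_le_of_le_one (by linarith) (by linarith) (by simp)
      nlinarith
    nlinarith

lemma sq_div_four_sub_sq_le_mul_sub_invCube {y η τ : ℝ} (hη : 0 < η) (hη' : η ≤ 1 / 2)
    (hτ : |τ| ≤ 1 / 4) :
    min |y - 1| 1 ^ 2 / 4 - τ ^ 2 ≤ (y - 1) * (1 + τ - invCube η y) := by
  have hmain := mul_abs_sub_one_le_mul_one_sub_invCube (y := y) hη hη'
  have hτy : -(|y - 1| * |τ|) ≤ (y - 1) * τ := abs_mul (y - 1) τ ▸ neg_abs_le _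
  rw [← sq_abs τ]
  rcases le_total |y - 1| 1 with h | h
  · rw [min_eq_left h] at hmain ⊢
    nlinarith [sq_nonneg (|y - 1| / 2 - |τ|)]
  · rw [min_eq_right h] at hmain ⊢
    nlinarith [abs_nonneg τ]

lemma sq_div_four_sub_residual_sq_le {k y ε w : ℝ} (hk : 0 < k) (hε : 0 < ε) (hεk : ε ≤ k / 2)
    (hres : |k ^ 3 * w - 1| ≤ 1 / 4) :
    min (|y - k| / k) 1 ^ 2 / 4 - (k ^ 3 * w - 1) ^ 2
      ≤ k ^ 2 * ((y - k) * (w - invCube ε y)) := by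
  have hscaled := sq_div_four_sub_sq_le_mul_sub_invCube (y := y / k) (η := ε / k)
    (by positivity) (by rw [div_le_iff₀ hk]; linarith) hres
  have hdiff : y / k - 1 = (y - k) / k := by field_simp
  have hG : invCube (ε / k) (y / k) = k ^ 3 * invCube ε y := by
    have := hε.trans_le (le_max_right y ε)
    unfold invCube
    rw [max_div_div_right hk.le]
    field_simp
  rw [hdiff, hG, abs_div, abs_of_pos hk] at hscaled
  refine hscaled.trans_eq ?_
  field_simp
  ring

lemma abs_sub_add_invCube_sub_le {k y ε w : ℝ} (hk : 0 < k) (hw : 1 ≤ w) (hε : 0 < ε)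
    (hwε : 2 * (w + 1) * ε ^ 3 ≤ 1) :
    |y - k| + k / 2 * invCube ε y - ((w + 1) * k + 4 / k ^ 2) ≤ (y - k) * (w - invCube ε y) := by
  have hk₂ : 0 ≤ 4 / k ^ 2 := by positivity
  rcases lt_or_ge y 0 with hy | hy
  · have hG : 2 * (w + 1) ≤ invCube ε y :=
      ((le_div_iff₀ (by positivity)).2 hwε).trans (le_invCube hε le_rfl (by linarith))
    rw [abs_of_neg (by linarith)]
    nlinarith [mul_nonneg (neg_nonneg.2 hy.le) (show 0 ≤ invCube ε y - w - 1 by linarith)]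
  · have hforce : |y - k| - (w + 1) * k ≤ (y - k) * w := by
      rcases abs_cases (y - k) with ⟨h, -⟩ | ⟨h, -⟩ <;> rw [h] <;> nlinarith
    have : 0 < max y ε := lt_max_of_lt_right hε
    have hsing : -(4 / k ^ 2) ≤ (k / 2 - max y ε) * invCube ε y := by
      obtain ⟨t, ht₀, ht⟩ : ∃ t, 0 < t ∧ max y ε = k / 2 * t :=
        ⟨max y ε / (k / 2), by positivity, by field_simp⟩
      have hcubic : 0 ≤ t ^ 3 - t + 1 := by nlinarith [sq_nonneg (t - 1), pow_pos ht₀ 2]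
      have : (k / 2 - max y ε) * invCube ε y + 4 / k ^ 2
          = 4 * (t ^ 3 - t + 1) / (k ^ 2 * t ^ 3) := by
        unfold invCube
        rw [ht]
        field_simp
        ring
      linarith [show 0 ≤ 4 * (t ^ 3 - t + 1) / (k ^ 2 * t ^ 3) by positivity]
    have hmax : y * invCube ε y ≤ max y ε * invCube ε y :=
      mul_le_mul_of_nonneg_right (le_max_left _ _) (invCube_pos hε y).le
    linarith

/-- The derivative at `x` of the energy of `K - κ`, for a solution `K` of the truncated equation
`K''' = x² + a - invCube ε K` with value `y` at `x`. -/
noncomputable def energyRate (a : ℝ) (κ : ℕ → ℝ → ℝ) (ε x y : ℝ) : ℝ :=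
  (y - κ 0 x) * (x ^ 2 + a - κ 3 x - invCube ε y)

lemma inv_le_farField {x R : ℝ} (hx : |x| ≤ R) : (1 + R ^ 2)⁻¹ ≤ farField x := by
  have hφ := farField_pos x
  have hcube : farField x ^ 3 ≤ farField x := pow_le_of_le_one hφ.le (farField_le_one x) (by simp)
  calc (1 + R ^ 2)⁻¹ ≤ (1 + x ^ 2)⁻¹ := by
        gcongr 1
        rw [add_le_add_iff_left]
        exact sq_le_sq' (abs_le.1 hx).1 (abs_le.1 hx).2
    _ = farField x ^ 3 := (eq_inv_of_mul_eq_one_left (farField_cube_mul x)).symm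
    _ ≤ farField x := hcube

namespace IsProfile

variable {a D : ℝ} {κ : ℕ → ℝ → ℝ} (h : IsProfile a D κ)
include h

lemma exists_local_coercivity (R : ℝ) :
    ∃ c B l : ℝ, 0 < c ∧ 0 ≤ B ∧ 0 < l ∧ ∀ x ε y, |x| ≤ R → 0 < ε → ε ≤ l →
      c * (|y - κ 0 x| + invCube ε y) - B ≤ energyRate a κ ε x y := by
  have hD := h.const_nonneg
  set W := R ^ 2 + |a| + D
  set r := (1 + R ^ 2)⁻¹
  have : 0 < r := by positivity
  refine ⟨min 1 (r / 2), (W + 1) * (1 + D) + 4 / r ^ 2, min 1 (2 * (W + 1))⁻¹, by positivity,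
    by positivity, by positivity, fun x ε y hx hε hεl => ?_⟩
  have hrκ : r ≤ κ 0 x := (inv_le_farField hx).trans (h.farField_le x)
  have hκ := h.pos x
  have hκD : κ 0 x ≤ 1 + D := (h.le_mul_farField x).trans
    (mul_le_of_le_one_right (by positivity) (farField_le_one x))
  have hw := h.one_le_forcing x
  have hwW : x ^ 2 + a - κ 3 x ≤ W := by
    have := sq_le_sq' (abs_le.1 hx).1 (abs_le.1 hx).2
    linarith [le_abs_self a, (abs_le.1 (h.abs_three_le x)).1]
  have hwε : 2 * (x ^ 2 + a - κ 3 x + 1) * ε ^ 3 ≤ 1 := by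
    calc 2 * (x ^ 2 + a - κ 3 x + 1) * ε ^ 3 ≤ 2 * (W + 1) * ε := by
          gcongr
          exact pow_le_of_le_one hε.le (hεl.trans (min_le_left _ _)) three_ne_zero
      _ ≤ 2 * (W + 1) * (2 * (W + 1))⁻¹ := by
          gcongr
          exact hεl.trans (min_le_right _ _)
      _ = 1 := mul_inv_cancel₀ (by positivity)
  have hG := invCube_pos hε y
  have habs : min 1 (r / 2) * |y - κ 0 x| ≤ |y - κ 0 x| :=
    mul_le_of_le_one_left (abs_nonneg _) (min_le_left _ _)
  have hsing : min 1 (r / 2) * invCube ε y ≤ κ 0 x / 2 * invCube ε y := by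
    gcongr
    exact (min_le_right _ _).trans (by linarith)
  have hconst : (x ^ 2 + a - κ 3 x + 1) * κ 0 x + 4 / κ 0 x ^ 2
      ≤ (W + 1) * (1 + D) + 4 / r ^ 2 := by gcongr
  have hcore := abs_sub_add_invCube_sub_le (y := y) hκ hw hε hwε
  unfold energyRate
  linarith

lemma exists_neg_div_le_energyRate :
    ∃ C l : ℝ, 0 ≤ C ∧ 0 < l ∧ ∀ x ε y, 0 < ε → ε ≤ l → ε ≤ κ 0 x / 2 →
      -(C * (1 / (1 + x ^ 2))) ≤ energyRate a κ ε x y := by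
  obtain ⟨C, hC, hres⟩ := h.exists_abs_residual_le
  obtain ⟨c, B, l, hc, hB, hl, hlocal⟩ := h.exists_local_coercivity (4 * C)
  refine ⟨C ^ 2 + B * (4 * C), l, by positivity, hl, fun x ε y hε hεl hεκ => ?_⟩
  have hφ := farField_pos x
  have hφ3 := farField_cube_mul x
  rw [← eq_one_div_of_mul_eq_one_left hφ3]
  rcases le_total (C * farField x ^ 3) (1 / 4) with hfar | hnear
  · have hcoercive := sq_div_four_sub_residual_sq_le (y := y) (h.pos x) hε hεκ
      ((hres x).trans hfar)
    have hres₂ := pow_le_pow_left₀ (abs_nonneg _) (hres x) 2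
    rw [sq_abs] at hres₂
    have hbelow : -(C ^ 2 * farField x ^ 6) ≤ κ 0 x ^ 2 * energyRate a κ ε x y := by
      unfold energyRate
      linarith [sq_nonneg (min (|y - κ 0 x| / κ 0 x) 1)]
    have hφκ := pow_le_pow_left₀ hφ.le (h.farField_le x) 2
    have hpow : farField x ^ 4 ≤ farField x ^ 3 :=
      pow_le_pow_of_le_one hφ.le (farField_le_one x) (by simp)
    rcases le_or_gt 0 (energyRate a κ ε x y) with hrate | hrate
    · exact (neg_nonpos.2 (by positivity)).trans hrate
    · have hrate_ge : -(C ^ 2 * farField x ^ 4) ≤ energyRate a κ ε x y := by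
        refine le_of_mul_le_mul_left ?_ (pow_pos hφ 2)
        linarith [mul_le_mul_of_nonpos_right hφκ hrate.le]
      have : 0 ≤ B * (4 * C) * farField x ^ 3 := by positivity
      nlinarith [mul_le_mul_of_nonneg_left hpow (sq_nonneg C)]
  · have hx : |x| ≤ 4 * C := by
      have : 1 + |x| ^ 2 ≤ 4 * C := by rw [sq_abs]; nlinarith [sq_nonneg x]
      nlinarith [sq_nonneg (|x| - 1)]
    have hcoercive := hlocal x ε y hx hε hεl
    have hG := invCube_pos hε y
    have : 0 ≤ c * (|y - κ 0 x| + invCube ε y) := by positivity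
    have : 0 ≤ C ^ 2 * farField x ^ 3 := by positivity
    nlinarith

lemma exists_far_coercivity {η : ℝ} (hη : 0 < η) :
    ∃ c : ℝ, 0 < c ∧ ∀ᶠ x in cocompact ℝ, ∀ ε y, 0 < ε → ε ≤ κ 0 x / 2 →
      η * farField x ≤ |y - κ 0 x| → c / farField x ^ 2 ≤ energyRate a κ ε x y := by
  have hD := h.const_nonneg
  obtain ⟨C, _, hres⟩ := h.exists_abs_residual_le
  set m := min (η / (1 + D)) 1
  have hm : 0 < m := by positivity
  refine ⟨m ^ 2 / 8 / (1 + D) ^ 2, by positivity, ?_⟩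
  have hsmall : Tendsto (fun x => C * farField x ^ 3) (cocompact ℝ) (𝓝 0) := by
    simpa using (tendsto_farField_cocompact.pow 3).const_mul C
  filter_upwards [hsmall.eventually_le_const (show 0 < m / 4 by positivity)] with x hx ε y hε hεκ hy
  have := farField_pos x
  have hκ := h.pos x
  have hm_le : m ≤ min (|y - κ 0 x| / κ 0 x) 1 := by
    refine min_le_min_right _ ?_
    rw [div_le_div_iff₀ (by positivity) hκ]
    nlinarith [h.le_mul_farField x]
  have hres_le : |κ 0 x ^ 3 * (x ^ 2 + a - κ 3 x) - 1| ≤ m / 4 := (hres x).trans hx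
  have hres₂ := pow_le_pow_left₀ (abs_nonneg _) hres_le 2
  rw [sq_abs] at hres₂
  have hcoercive := sq_div_four_sub_residual_sq_le (y := y) hκ hε hεκ
    (hres_le.trans (by gcongr; exact min_le_right _ _))
  have hm₂ := pow_le_pow_left₀ hm.le hm_le 2
  calc m ^ 2 / 8 / (1 + D) ^ 2 / farField x ^ 2 = m ^ 2 / 8 / ((1 + D) * farField x) ^ 2 := by
        rw [mul_pow, div_div]
    _ ≤ m ^ 2 / 8 / κ 0 x ^ 2 := by
        gcongr
        exact h.le_mul_farField x
    _ ≤ energyRate a κ ε x y := by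
        rw [div_le_iff₀ (by positivity)]
        unfold energyRate
        linarith [sq_nonneg m]

end IsProfile

/-! ### Solutions on bounded intervals -/

/-- A solution `K` on `[-N, N]` of the equation truncated at height `ε`, whose deviation from the
profile `κ` has energy at most `C`. -/
structure IsApproxSolution (a C N ε : ℝ) (κ K : ℕ → ℝ → ℝ) : Prop where
  eps_pos : 0 < ε
  eps_le : ∀ x ∈ Icc (-N) N, ε ≤ κ 0 x / 2
  isJetOn : IsJetOn 3 K (Icc (-N) N)
  ode : ∀ x ∈ Icc (-N) N, K 3 x = x ^ 2 + a - invCube ε (K 0 x)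
  abs_energy_le : ∀ x ∈ Icc (-N) N, |energy (fun i x => K i x - κ i x) x| ≤ C

lemma abs_le_mul_pi_of_neg_div_le_deriv {E E' : ℝ → ℝ} {s t C : ℝ} (hC : 0 ≤ C)
    (hE : ∀ x ∈ Icc s t, HasDerivAt E (E' x) x)
    (hE' : ∀ x ∈ Icc s t, -(C * (1 / (1 + x ^ 2))) ≤ E' x) (hs : 0 ≤ E s) (ht : E t ≤ 0)
    {x : ℝ} (hx : x ∈ Icc s t) : |E x| ≤ C * Real.pi := by
  have hmono : ∀ y z, y ∈ Icc s t → z ∈ Icc s t → y ≤ z →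
      E y + C * Real.arctan y ≤ E z + C * Real.arctan z := by
    intro y z hy hz hyz
    have hsub : Icc y z ⊆ Icc s t := Icc_subset_Icc hy.1 hz.2
    have := mul_sub_le_sub_of_hasDerivAt (c := 0) hyz
      (fun w hw => (hE w (hsub hw)).add ((Real.hasDerivAt_arctan w).const_mul C))
      fun w hw => by linarith [hE' w (hsub hw)]
    simp only [Pi.add_apply] at this
    linarith
  have harctan : ∀ y z, C * (Real.arctan y - Real.arctan z) ≤ C * Real.pi := fun y z =>
    mul_le_mul_of_nonneg_left
      (by linarith [Real.arctan_lt_pi_div_two y, Real.neg_pi_div_two_lt_arctan z]) hC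
  have hst := hx.1.trans hx.2
  rw [abs_le]
  constructor
  · linarith [hmono s x ⟨le_rfl, hst⟩ hx hx.1, harctan x s]
  · linarith [hmono x t hx ⟨hst, le_rfl⟩ hx.2, harctan t x]

lemma abs_sq_add_sub_invCube_le {a ε t R : ℝ} (hε : 0 < ε) (ht : |t| ≤ R) (y : ℝ) :
    |t ^ 2 + a - invCube ε y| ≤ R ^ 2 + |a| + 1 / ε ^ 3 := by
  have hsq : |t ^ 2| ≤ R ^ 2 := by
    rw [abs_pow]
    gcongr
  have hG : |invCube ε y| ≤ 1 / ε ^ 3 := by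
    rw [abs_of_pos (invCube_pos hε y)]
    exact invCube_le hε (le_max_right y ε)
  linarith [abs_sub (t ^ 2 + a) (invCube ε y), abs_add_le (t ^ 2) a]

namespace IsProfile

variable {a D : ℝ} {κ : ℕ → ℝ → ℝ} (h : IsProfile a D κ)
include h

lemma exists_isApproxSolution :
    ∃ C l : ℝ, 0 ≤ C ∧ 0 < l ∧ ∀ N ε, 0 < N → 0 < ε → ε ≤ l → ε ≤ (1 + N ^ 2)⁻¹ / 2 →
      ∃ K, IsApproxSolution a C N ε κ K := by
  obtain ⟨C, l, hC, hl, hrate⟩ := h.exists_neg_div_le_energyRate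
  refine ⟨C * Real.pi, l, by positivity, hl, fun N ε hN hε hεl hεN => ?_⟩
  have hεκ : ∀ x ∈ Icc (-N) N, ε ≤ κ 0 x / 2 := fun x hx => by
    linarith [inv_le_farField (abs_le.2 hx), h.farField_le x]
  obtain ⟨K, hK, hode, hleft, hleft', hright⟩ := exists_jet_solving_boundary_value_problem
    (F := fun t y => t ^ 2 + a - invCube ε y) (by linarith : -N < N) (fun y => by fun_prop)
    (fun t => by
      simpa using (LipschitzWith.const (t ^ 2 + a)).sub (lipschitzWith_invCube hε))
    (fun t ht => abs_sq_add_sub_invCube_le (R := N + 1) hε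
      (abs_le.2 ⟨by linarith [ht.1], ht.2⟩))
    (κ 0 (-N)) (κ 1 (-N)) (κ 0 N)
  refine ⟨K, hε, hεκ, hK, fun x _ => hode x, fun x hx => ?_⟩
  refine abs_le_mul_pi_of_neg_div_le_deriv hC
    (fun y hy => (hK.sub (h.isJetOn.mono le_rfl (subset_univ _))).hasDerivAt_energy hy)
    (fun y hy => ?_) ?_ ?_ hx
  · have := hrate y ε (K 0 y) hε hεl (hεκ y hy)
    unfold energyRate at this
    rw [hode]
    linarith
  · simp [energy, hleft, hleft']
  · simp only [energy, hright]
    linarith [sq_nonneg (K 1 N - κ 1 N)]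

theorem exists_seq_isApproxSolution :
    ∃ (C : ℝ) (ε : ℕ → ℝ) (K : ℕ → ℕ → ℝ → ℝ), 0 ≤ C ∧ Tendsto ε atTop (𝓝 0) ∧
      ∀ n : ℕ, IsApproxSolution a C (n + 1) (ε n) κ (K n) := by
  obtain ⟨C, l, hC, hl, happrox⟩ := h.exists_isApproxSolution
  set ε : ℕ → ℝ := fun n => min l ((1 + ((n : ℝ) + 1) ^ 2)⁻¹ / 2)
  have hε : ∀ n, 0 < ε n := fun n => by positivity
  choose K hK using fun n : ℕ =>
    happrox (n + 1) (ε n) (by positivity) (hε n) (min_le_left _ _) (min_le_right _ _)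
  refine ⟨C, ε, K, hC, ?_, hK⟩
  refine squeeze_zero (fun n => (hε n).le) (fun n => ?_) tendsto_one_div_add_atTop_nhds_zero_nat
  have : (0 : ℝ) ≤ n := n.cast_nonneg
  calc ε n ≤ (1 + ((n : ℝ) + 1) ^ 2)⁻¹ / 2 := min_le_right _ _
    _ ≤ (1 + ((n : ℝ) + 1) ^ 2)⁻¹ := half_le_self (by positivity)
    _ ≤ 1 / ((n : ℝ) + 1) := by
        rw [one_div]
        exact inv_anti₀ (by positivity) (by nlinarith)

end IsProfile

namespace IsApproxSolution

variable {a D C N ε : ℝ} {κ K : ℕ → ℝ → ℝ} (hK : IsApproxSolution a C N ε κ K)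
include hK

lemma sub_mul_sub_eq_energyRate {x : ℝ} (hx : x ∈ Icc (-N) N) :
    (K 0 x - κ 0 x) * (K 3 x - κ 3 x) = energyRate a κ ε x (K 0 x) := by
  rw [hK.ode x hx, energyRate]
  ring

variable (h : IsProfile a D κ)
include h

lemma isJetOn_sub : IsJetOn 3 (fun i x => K i x - κ i x) (Icc (-N) N) :=
  hK.isJetOn.sub (h.isJetOn.mono le_rfl (subset_univ _))

lemma mul_sub_le_of_le_energyRate {s t c : ℝ} (hst : s ≤ t) (hsub : Icc s t ⊆ Icc (-N) N)
    (hc : ∀ x ∈ Icc s t, c ≤ energyRate a κ ε x (K 0 x)) : c * (t - s) ≤ 2 * C := by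
  have hgap := mul_sub_le_sub_of_hasDerivAt hst
    (fun x hx => (hK.isJetOn_sub h).hasDerivAt_energy (hsub hx))
    fun x hx => (hc x hx).trans_eq (hK.sub_mul_sub_eq_energyRate (hsub hx)).symm
  have hs := abs_le.1 (hK.abs_energy_le s (hsub ⟨le_rfl, hst⟩))
  have ht := abs_le.1 (hK.abs_energy_le t (hsub ⟨hst, le_rfl⟩))
  linarith

lemma mul_le_of_le_abs_sub {x₀ T m c : ℝ} (hT : 0 ≤ T) (hTN : |x₀| + T ≤ N) (hm : 0 ≤ m)
    (hx₀ : m ≤ |K 0 x₀ - κ 0 x₀|) (hCT : 4 * C * T ^ 2 ≤ 3 * m ^ 2)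
    (hc : ∀ x, |x - x₀| ≤ T → m / 2 ≤ |K 0 x - κ 0 x| → c ≤ energyRate a κ ε x (K 0 x)) :
    c * T ≤ 2 * C := by
  have hsub : Icc (x₀ - T) (x₀ + T) ⊆ Icc (-N) N :=
    Icc_subset_Icc (by linarith [neg_abs_le x₀]) (by linarith [le_abs_self x₀])
  refine ((hK.isJetOn_sub h).mono le_rfl hsub).mul_le_energy_gap hT
    (fun x hx => hK.abs_energy_le x (hsub hx)) hm hx₀ hCT fun x hx hmx => ?_
  rw [hK.sub_mul_sub_eq_energyRate (hsub hx)]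
  exact hc x (abs_le.2 ⟨by linarith [hx.1], by linarith [hx.2]⟩) hmx

end IsApproxSolution

/-! ### A priori bounds -/

lemma eventually_cocompact_forall_abs_sub_le {p : ℝ → Prop} (hp : ∀ᶠ x in cocompact ℝ, p x)
    (T : ℝ) : ∀ᶠ x in cocompact ℝ, ∀ y, |y - x| ≤ T → p y := by
  rw [← Metric.cobounded_eq_cocompact, ← comap_norm_atTop, eventually_comap,
    eventually_atTop] at hp ⊢
  obtain ⟨X, hX⟩ := hp
  refine ⟨X + T, fun b hb x hx y hy => hX |y| ?_ y rfl⟩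
  rw [Real.norm_eq_abs] at hx
  linarith [abs_sub_abs_le_abs_sub x y, abs_sub_comm x y]

namespace IsProfile

variable {a D C : ℝ} {κ : ℕ → ℝ → ℝ} (h : IsProfile a D κ) (hC : 0 ≤ C)
include h hC

lemma eventually_abs_sub_le_mul {δ : ℝ} (hδ : 0 < δ) :
    ∀ᶠ x in cocompact ℝ, ∀ N ε K, IsApproxSolution a C N ε κ K → |x| + 1 ≤ N →
      |K 0 x - κ 0 x| ≤ δ * κ 0 x := by
  obtain ⟨c, hc, hcoercive⟩ := h.exists_far_coercivity (η := δ / 4) (by positivity)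
  set b := δ / (1 + δ + 2 * C)
  have hb : 0 < b := by positivity
  have hb_one : b ≤ 1 := (div_le_one (by positivity)).2 (by linarith)
  have hb_sq : 4 * C * b ^ 2 ≤ 3 * δ ^ 2 := by
    rw [div_pow, mul_div_assoc', div_le_iff₀ (by positivity)]
    nlinarith [mul_nonneg (sq_nonneg δ) (show 0 ≤ 3 * (1 + δ + 2 * C) ^ 2 - 4 * C by nlinarith)]
  have hsmall : ∀ᶠ x in cocompact ℝ, farField x < c * b / (8 * (C + 1)) :=
    tendsto_farField_cocompact.eventually_lt_const (by positivity)
  filter_upwards [eventually_cocompact_forall_abs_sub_le hcoercive 1, hsmall]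
    with x hx hxsmall N ε K hK hxN
  have hφ := farField_pos x
  suffices hclose : |K 0 x - κ 0 x| < δ * farField x from
    hclose.le.trans (mul_le_mul_of_nonneg_left (h.farField_le x) hδ.le)
  by_contra! hfar
  have hT : b * farField x ≤ 1 := mul_le_one₀ hb_one hφ.le (farField_le_one x)
  have hgap := hK.mul_le_of_le_abs_sub h (T := b * farField x) (c := c / (2 * farField x) ^ 2)
    (by positivity) (by linarith) (by positivity) hfar
    (by nlinarith [mul_le_mul_of_nonneg_right hb_sq (sq_nonneg (farField x))]) fun y hy hKy => ?_
  · rw [lt_div_iff₀ (by positivity)] at hxsmall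
    have hgap' : c * b / (4 * farField x) ≤ 2 * C := by
      refine le_of_eq_of_le ?_ hgap
      field_simp
      ring
    rw [div_le_iff₀ (by positivity)] at hgap'
    nlinarith
  · have hyx : |y - x| ≤ 1 := hy.trans hT
    have hyN : y ∈ Icc (-N) N := abs_le.1 (by linarith [abs_sub_abs_le_abs_sub y x])
    have hφy := farField_pos y
    have hφxy : farField y ≤ 2 * farField x :=
      farField_le_two_mul (by rwa [abs_sub_comm])
    calc c / (2 * farField x) ^ 2 ≤ c / farField y ^ 2 := by gcongr
      _ ≤ energyRate a κ ε y (K 0 y) :=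
        hx y hyx ε (K 0 y) hK.eps_pos (hK.eps_le y hyN)
          (by linarith [mul_le_mul_of_nonneg_left hφxy (show 0 ≤ δ / 4 by positivity)])

end IsProfile

section Family

variable {ι : Type*} {U : Filter ι} {a D C : ℝ} {κ : ℕ → ℝ → ℝ} {N ε : ι → ℝ} {K : ι → ℕ → ℝ → ℝ}
  (h : IsProfile a D κ) (hC : 0 ≤ C) (hN : Tendsto N U atTop) (hε : Tendsto ε U (𝓝 0))
  (hK : ∀ n, IsApproxSolution a C (N n) (ε n) κ (K n))
include h hC hN hε hK

lemma exists_eventually_abs_le (R : ℝ) :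
    ∃ M, ∀ᶠ n in U, ∀ x, |x| ≤ R → |K n 0 x| ≤ M := by
  obtain ⟨c, B, l, hc, hB, hl, hcoercive⟩ := h.exists_local_coercivity (R + 1)
  set m := 2 * (2 * C + 1 + B) / c + (C + 1) with hm_def
  have hm : C + 1 ≤ m := le_add_of_nonneg_left (by positivity)
  have hmc : 2 * C + 1 ≤ c * (m / 2) - B := by
    have : c * m = 2 * (2 * C + 1 + B) + c * (C + 1) := by
      rw [hm_def]
      field_simp
    nlinarith
  refine ⟨m + (1 + D), ?_⟩
  filter_upwards [hN.eventually_ge_atTop (R + 1), hε.eventually_le_const hl] with n hNn hεn x hx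
  have hclose : |K n 0 x - κ 0 x| < m := by
    by_contra! hfar
    have hgap := (hK n).mul_le_of_le_abs_sub h (c := c * (m / 2) - B) zero_le_one
      (by linarith) (by linarith) hfar (by nlinarith) fun y hy hKy => ?_
    · linarith
    · have hyR : |y| ≤ R + 1 := by linarith [abs_sub_abs_le_abs_sub y x]
      have hG := invCube_pos (hK n).eps_pos (K n 0 y)
      refine le_trans ?_ (hcoercive y _ (K n 0 y) hyR (hK n).eps_pos hεn)
      gcongr
      linarith
  have hκ : κ 0 x ≤ 1 + D := (h.le_mul_farField x).trans
    (mul_le_of_le_one_right (by linarith [h.const_nonneg]) (farField_le_one x))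
  calc |K n 0 x| = |K n 0 x - κ 0 x + κ 0 x| := by rw [sub_add_cancel]
    _ ≤ |K n 0 x - κ 0 x| + |κ 0 x| := abs_add_le _ _
    _ ≤ m + (1 + D) := by
      rw [abs_of_pos (h.pos x)]
      gcongr

lemma exists_eventually_neg_le_deriv (R : ℝ) :
    ∃ A, 0 ≤ A ∧ ∀ᶠ n in U, ∀ x, |x| ≤ R → -A ≤ K n 1 x := by
  obtain ⟨M, hM⟩ := exists_eventually_abs_le h hC hN hε hK (R + 1)
  refine ⟨|M + ((R + 1) ^ 2 + |a|) / 6|, abs_nonneg _, ?_⟩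
  filter_upwards [hN.eventually_ge_atTop (R + 1), hM] with n hNn hMn x hx
  have hsub : ∀ y ∈ Icc (x - 1) (x + 1), |y| ≤ R + 1 := fun y hy =>
    abs_le.2 ⟨by linarith [hy.1, (abs_le.1 hx).1], by linarith [hy.2, (abs_le.1 hx).2]⟩
  have hsubN : Icc (x - 1) (x + 1) ⊆ Icc (-N n) (N n) := fun y hy =>
    abs_le.1 ((hsub y hy).trans hNn)
  refine le_trans (neg_le_neg (le_abs_self _)) (((hK n).isJetOn.mono le_rfl hsubN).neg_add_le_deriv
    (fun y hy => hMn y (hsub y hy)) fun y hy => ?_)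
  have hsq := sq_le_sq' (abs_le.1 (hsub y hy)).1 (abs_le.1 (hsub y hy)).2
  rw [(hK n).ode y (hsubN hy)]
  linarith [invCube_pos (hK n).eps_pos (K n 0 y), le_abs_self a]

lemma exists_eventually_le (R : ℝ) :
    ∃ μ, 0 < μ ∧ ∀ᶠ n in U, ∀ x, |x| ≤ R → μ ≤ K n 0 x := by
  obtain ⟨c, B, l, hc, hB, hl, hcoercive⟩ := h.exists_local_coercivity (R + 1)
  obtain ⟨A, hA, hslope⟩ := exists_eventually_neg_le_deriv h hC hN hε hK (R + 1)
  set μ := min 1 (c / ((1 + A) ^ 3 * (2 * C + B + 1)))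
  have hμ : 0 < μ := by positivity
  have hμ_one : μ ≤ 1 := min_le_left _ _
  have hμc : μ * ((1 + A) ^ 3 * (2 * C + B + 1)) ≤ c :=
    (le_div_iff₀ (by positivity)).1 (min_le_right _ _)
  refine ⟨μ, hμ, ?_⟩
  filter_upwards [hN.eventually_ge_atTop (R + 1), hε.eventually_le_const hl,
    hε.eventually_le_const hμ, hslope] with n hNn hεl hεμ hslope_n x hx
  by_contra! hlt
  have hsub : ∀ y ∈ Icc (x - μ) x, |y| ≤ R + 1 := fun y hy =>
    abs_le.2 ⟨by linarith [hy.1, (abs_le.1 hx).1], by linarith [hy.2, (abs_le.1 hx).2]⟩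
  have hsubN : Icc (x - μ) x ⊆ Icc (-N n) (N n) := fun y hy => abs_le.1 ((hsub y hy).trans hNn)
  have hjet := (hK n).isJetOn.mono le_rfl hsubN
  have hsmall : ∀ y ∈ Icc (x - μ) x, K n 0 y ≤ (1 + A) * μ := by
    intro y hy
    have hyx : Icc y x ⊆ Icc (x - μ) x := Icc_subset_Icc_left hy.1
    have := mul_sub_le_sub_of_hasDerivAt hy.2 (fun z hz => hjet 0 (by simp) z (hyx hz))
      fun z hz => hslope_n z (hsub z (hyx hz))
    nlinarith [hy.1]
  have hrate : ∀ y ∈ Icc (x - μ) x,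
      c * (1 / ((1 + A) * μ) ^ 3) - B ≤ energyRate a κ (ε n) y (K n 0 y) := by
    intro y hy
    refine le_trans ?_ (hcoercive y _ _ (hsub y hy) (hK n).eps_pos hεl)
    have hG := le_invCube (hK n).eps_pos (hεμ.trans (by nlinarith)) (hsmall y hy)
    gcongr
    linarith [abs_nonneg (K n 0 y - κ 0 y)]
  have hgap := (hK n).mul_sub_le_of_le_energyRate h (by linarith) hsubN hrate
  have hlarge : 2 * C + B + 1 ≤ c * (1 / ((1 + A) * μ) ^ 3) * μ := by
    calc 2 * C + B + 1 ≤ c / (1 + A) ^ 3 / μ := by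
          rw [div_div, le_div_iff₀ (by positivity)]
          linarith
      _ ≤ c / (1 + A) ^ 3 / μ / μ := le_div_self (by positivity) hμ hμ_one
      _ = c * (1 / ((1 + A) * μ) ^ 3) * μ := by field_simp
  nlinarith

end Family

/-! ### Passage to the limit -/

/-- The jet of a solution `f 0` of `f''' = x² + a - 1 / f³`, with the derivatives of order three
and four read off the equation. -/
noncomputable def equationJet (a : ℝ) (f : ℕ → ℝ → ℝ) : ℕ → ℝ → ℝ
  | 0 => f 0
  | 1 => f 1
  | 2 => f 2
  | 3 => fun x => x ^ 2 + a - 1 / f 0 x ^ 3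
  | _ => fun x => 2 * x + 3 * f 1 x / f 0 x ^ 4

lemma IsApproxSolution.isJetOn_equationJet {a C N ε : ℝ} {κ K : ℕ → ℝ → ℝ} {s : Set ℝ}
    (hK : IsApproxSolution a C N ε κ K) (hs : s ⊆ Icc (-N) N) (hε : ∀ x ∈ s, ε ≤ K 0 x) :
    IsJetOn 4 (equationJet a K) s := by
  intro i hi x hx
  have hjet (j : ℕ) (hj : j < 3) := hK.isJetOn j hj x (hs hx)
  have hKx : K 0 x ≠ 0 := (hK.eps_pos.trans_le (hε x hx)).ne'
  match i, hi with
  | 0, _ => exact hjet 0 (by simp)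
  | 1, _ => exact hjet 1 (by simp)
  | 2, _ =>
    have hode := hK.ode x (hs hx)
    rw [invCube, max_eq_left (hε x hx)] at hode
    simpa only [equationJet, hode] using hjet 2 (by simp)
  | 3, _ =>
    have hderiv := (((hasDerivAt_pow 2 x).add_const a).sub
      (((hjet 0 (by simp)).pow 3).inv (pow_ne_zero 3 hKx)))
    simp only [equationJet, one_div]
    refine hderiv.congr_deriv ?_
    simp only [Pi.pow_apply]
    field_simp
    ring

lemma exists_abs_equationJet_le (a R M : ℝ) {μ : ℝ} (hμ : 0 < μ) :
    ∃ A, ∀ f x, |x| ≤ R → IsJetOn 3 (equationJet a f) (Icc (x - 1) (x + 1)) →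
      (∀ y ∈ Icc (x - 1) (x + 1), μ ≤ f 0 y ∧ f 0 y ≤ M) →
      ∀ i ≤ 4, |equationJet a f i x| ≤ A := by
  set B := (R + 1) ^ 2 + |a| + 1 / μ ^ 3
  refine ⟨4 * M + B + (2 * R + 3 * (4 * M + B) / μ ^ 4), fun f x hx hjet hf i hi => ?_⟩
  have hxx : x ∈ Icc (x - 1) (x + 1) := ⟨by linarith, by linarith⟩
  have hpos : ∀ y ∈ Icc (x - 1) (x + 1), 0 < f 0 y := fun y hy => hμ.trans_le (hf y hy).1
  have hzero : ∀ y ∈ Icc (x - 1) (x + 1), |equationJet a f 0 y| ≤ M := fun y hy =>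
    (abs_of_pos (hpos y hy)).trans_le (hf y hy).2
  have hthree : ∀ y ∈ Icc (x - 1) (x + 1), |equationJet a f 3 y| ≤ B := by
    intro y hy
    have hyR : |y| ≤ R + 1 := abs_le.2
      ⟨by linarith [hy.1, (abs_le.1 hx).1], by linarith [hy.2, (abs_le.1 hx).2]⟩
    have hinv : 1 / f 0 y ^ 3 = invCube μ (f 0 y) := by rw [invCube, max_eq_left (hf y hy).1]
    simp only [equationJet, hinv]
    exact abs_sq_add_sub_invCube_le hμ hyR (f 0 y)
  have hone := hjet.abs_deriv_le hzero hthree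
  have htwo := hjet.abs_deriv_deriv_le hzero hthree
  have hM : 0 ≤ M := (abs_nonneg _).trans (hzero x hxx)
  have hB : 0 ≤ B := (abs_nonneg _).trans (hthree x hxx)
  have hR : 0 ≤ R := (abs_nonneg x).trans hx
  have hfour : |equationJet a f 4 x| ≤ 2 * R + 3 * (4 * M + B) / μ ^ 4 := by
    have hf₁ : |f 1 x| ≤ 4 * M + B := hone.trans (by linarith)
    have hf₀ := (hf x hxx).1
    calc |2 * x + 3 * f 1 x / f 0 x ^ 4| ≤ |2 * x| + |3 * f 1 x / f 0 x ^ 4| := abs_add_le _ _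
      _ = 2 * |x| + 3 * |f 1 x| / f 0 x ^ 4 := by
        rw [abs_mul, abs_div, abs_mul, abs_two, abs_of_pos (pow_pos (hpos x hxx) 4), Nat.abs_ofNat]
      _ ≤ 2 * R + 3 * (4 * M + B) / μ ^ 4 := by gcongr
  have hfour₀ : 0 ≤ 2 * R + 3 * (4 * M + B) / μ ^ 4 := by positivity
  interval_cases i
  · linarith [hzero x hxx]
  · linarith
  · linarith
  · linarith [hthree x hxx]
  · linarith

section Family

variable {ι : Type*} {U : Filter ι} {a D C : ℝ} {κ : ℕ → ℝ → ℝ} {N ε : ι → ℝ} {K : ι → ℕ → ℝ → ℝ}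
  (h : IsProfile a D κ) (hC : 0 ≤ C) (hN : Tendsto N U atTop) (hε : Tendsto ε U (𝓝 0))
  (hK : ∀ n, IsApproxSolution a C (N n) (ε n) κ (K n))
include h hC hN hε hK

lemma exists_eventually_equationJet_bound (R : ℝ) :
    ∃ A, ∀ᶠ n in U, IsJetOn 4 (equationJet a (K n)) (Icc (-R) R) ∧
      ∀ i ≤ 4, ∀ x ∈ Icc (-R) R, |equationJet a (K n) i x| ≤ A := by
  obtain ⟨M, hM⟩ := exists_eventually_abs_le h hC hN hε hK (R + 1)
  obtain ⟨μ, hμ, hlower⟩ := exists_eventually_le h hC hN hε hK (R + 1)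
  obtain ⟨A, hA⟩ := exists_abs_equationJet_le a R M hμ
  refine ⟨A, ?_⟩
  filter_upwards [hM, hlower, hε.eventually_le_const hμ, hN.eventually_ge_atTop (R + 1)]
    with n hMn hlower_n hεn hNn
  have hsub : Icc (-(R + 1)) (R + 1) ⊆ Icc (-N n) (N n) :=
    Icc_subset_Icc (neg_le_neg hNn) hNn
  have hjet : IsJetOn 4 (equationJet a (K n)) (Icc (-(R + 1)) (R + 1)) :=
    (hK n).isJetOn_equationJet hsub fun x hx => hεn.trans (hlower_n x (abs_le.2 hx))
  refine ⟨hjet.mono le_rfl (Icc_subset_Icc (by linarith) (by linarith)), fun i hi x hx => ?_⟩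
  have hball : Icc (x - 1) (x + 1) ⊆ Icc (-(R + 1)) (R + 1) :=
    Icc_subset_Icc (by linarith [hx.1]) (by linarith [hx.2])
  exact hA (K n) x (abs_le.2 hx) (hjet.mono (by lia) hball) (fun y hy =>
    have hyR := abs_le.2 (hball hy)
    ⟨hlower_n y hyR, (le_abs_self _).trans (hMn y hyR)⟩) i hi

end Family

namespace IsProfile

variable {a D : ℝ} {κ : ℕ → ℝ → ℝ} (h : IsProfile a D κ)
include h

theorem exists_entire_solution :
    ∃ v : ℕ → ℝ → ℝ, IsJetOn 3 v univ ∧ (∀ x, 0 < v 0 x) ∧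
      (∀ x, v 3 x = x ^ 2 + a - 1 / v 0 x ^ 3) ∧
      ∀ δ > 0, ∀ᶠ x in cocompact ℝ, |v 0 x - κ 0 x| ≤ δ * κ 0 x := by
  obtain ⟨C, ε, K, hC, hε, hK⟩ := h.exists_seq_isApproxSolution
  have hU : (hyperfilter ℕ : Filter ℕ) ≤ atTop := Nat.hyperfilter_le_atTop
  have hεU := hε.mono_left hU
  have hN : Tendsto (fun n : ℕ => (n : ℝ) + 1) (hyperfilter ℕ) atTop :=
    (tendsto_atTop_add_const_right _ 1 tendsto_natCast_atTop_atTop).mono_left hU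
  obtain ⟨v, hv, hlim⟩ := exists_jet_limit (m := 3)
    (exists_eventually_equationJet_bound h hC hN hεU hK)
  have hpos (x : ℝ) : 0 < v 0 x := by
    obtain ⟨μ, hμ, hlower⟩ := exists_eventually_le h hC hN hεU hK |x|
    exact hμ.trans_le (ge_of_tendsto (hlim 0 (by simp) x) (hlower.mono fun n hn => hn x le_rfl))
  refine ⟨v, hv, hpos, fun x => ?_, fun δ hδ => ?_⟩
  · refine tendsto_nhds_unique (hlim 3 le_rfl x) ?_
    simp only [equationJet, one_div]
    exact (((hlim 0 (by simp) x).pow 3).inv₀ (pow_ne_zero 3 (hpos x).ne')).const_sub _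
  · filter_upwards [h.eventually_abs_sub_le_mul hC hδ] with x hx
    refine le_of_tendsto ((hlim 0 (by simp) x).sub_const (κ 0 x)).abs ?_
    filter_upwards [hN.eventually_ge_atTop (|x| + 1)] with n hn
    exact hx _ (ε n) (K n) (hK n) hn

lemma tendsto_div_farField : Tendsto (fun x => κ 0 x / farField x) (cocompact ℝ) (𝓝 1) := by
  have hbound : Tendsto (fun x => 1 + D * farField x ^ 3) (cocompact ℝ) (𝓝 1) := by
    simpa using ((tendsto_farField_cocompact.pow 3).const_mul D).const_add 1
  refine tendsto_of_tendsto_of_tendsto_of_le_of_le tendsto_const_nhds hbound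
    (fun x => (one_le_div (farField_pos x)).2 (h.farField_le x))
    fun x => (div_le_iff₀ (farField_pos x)).2 ?_
  linarith [h.le_farField_add x]

end IsProfile

theorem exists_solution_tendsto_cocompact (a : ℝ) :
    ∃ v : ℕ → ℝ → ℝ, IsJetOn 3 v univ ∧ (∀ x, 0 < v 0 x) ∧
      (∀ x, v 3 x = x ^ 2 + a - 1 / v 0 x ^ 3) ∧
      Tendsto (fun x => |x| ^ ((2 : ℝ) / 3) * v 0 x) (cocompact ℝ) (𝓝 1) := by
  obtain ⟨D, κ, h⟩ := exists_isProfile a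
  obtain ⟨v, hv, hpos, hode, hclose⟩ := h.exists_entire_solution
  refine ⟨v, hv, hpos, hode, ?_⟩
  have hratio : Tendsto (fun x => v 0 x / κ 0 x) (cocompact ℝ) (𝓝 1) := by
    refine Metric.nhds_basis_closedBall.tendsto_right_iff.2 fun δ hδ => ?_
    filter_upwards [hclose δ hδ] with x hx
    rw [Metric.mem_closedBall, Real.dist_eq, div_sub_one (h.pos x).ne', abs_div,
      abs_of_pos (h.pos x)]
    exact (div_le_iff₀ (h.pos x)).2 hx
  have hprod := tendsto_abs_rpow_mul_farField.mul (h.tendsto_div_farField.mul hratio)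
  rw [mul_one, mul_one] at hprod
  refine hprod.congr fun x => ?_
  have := h.pos x
  have := farField_pos x
  field_simp

end ThinFilm

/-- For every real parameter `a` there exists a three times continuously
differentiable positive function `H : ℝ → ℝ` satisfying `(H''' + ξ² + a) H³ = 1` on all of `ℝ`
and such that `|ξ|^(2/3) * H ξ → 1` as `ξ → ±∞`. -/
theorem exists_solution_thin_film (a : ℝ) :
    ∃ H : ℝ → ℝ, ContDiff ℝ 3 H ∧ (∀ ξ : ℝ, 0 < H ξ) ∧
      (∀ ξ : ℝ, (iteratedDeriv 3 H ξ + ξ ^ 2 + a) * (H ξ) ^ 3 = 1) ∧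
      Tendsto (fun ξ : ℝ => |ξ| ^ ((2 : ℝ) / 3) * H ξ) atTop (nhds 1) ∧
      Tendsto (fun ξ : ℝ => |ξ| ^ ((2 : ℝ) / 3) * H ξ) atBot (nhds 1) := by
  obtain ⟨v, hv, hpos, hode, hlim⟩ := ThinFilm.exists_solution_tendsto_cocompact a
  have hjet := hv.reflect
  rw [Set.preimage_univ] at hjet
  have hcont : Continuous (v 0) :=
    continuousOn_univ.1 (hv.continuousOn (by simp))
  have hlim_reflect : Tendsto (fun ξ => |ξ| ^ ((2 : ℝ) / 3) * v 0 (-ξ)) (cocompact ℝ) (nhds 1) := by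
    simpa [Function.comp_def] using hlim.comp (Homeomorph.neg ℝ).isClosedEmbedding.tendsto_cocompact
  refine ⟨fun ξ => v 0 (-ξ), ?_, fun ξ => hpos (-ξ), fun ξ => ?_,
    hlim_reflect.mono_left _root_.atTop_le_cocompact, hlim_reflect.mono_left atBot_le_cocompact⟩
  · have hcont₃ : Continuous fun ξ => (-1) ^ 3 * v 3 (-ξ) := by
      simp only [hode]
      fun_prop (disch := simp [(hpos _).ne'])
    simpa using hjet.contDiff hcont₃
  · have hiter := hjet.iteratedDeriv_eq (i := 3) le_rfl
    simp only [pow_zero, one_mul] at hiter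
    have := hpos (-ξ)
    simp only [hiter, hode]
    field_simp
    ring
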